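/- Let γ > 1, n ∈ ℕ, and let I be a closed interval contained in { r : 1 < r < r*(γ) and n < k(r) < n+1 }. Then there exists a constant C > 0 (depending on I and γ) such that for every r ∈ I the recursively defined Taylor coefficients satisfy |W_i| + |Z_i| ≤ C^{i+1}·i! for all i ≥ 0; consequently, for |ξ| < 1/C the power series W^{(r)}(ξ) = Σ_{i≥0} W_i ξ^i / i! and Z^{(r)}(ξ) = Σ_{i≥0} Z_i ξ^i / i! converge and (W^{(r)}, Z^{(r)}) is a smooth solution of the autonomous ODE system on (−1/C, 1/C). Moreover, for each fixed ξ with |ξ| < 1/C, the values W^{(r)}(ξ) and Z^{(r)}(ξ) depend continuously on r ∈ I. -/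

import Mathlib

/-!
The sonic point `P_s = (W₀, Z₀)` is a zero of both `D_Z` and `N_Z`, so that the second equation of
the system degenerates there. Comparing Taylor coefficients of order `m` in `D_Z Z' = N_Z` gives
`D_{Z,1} (m - k(r)) Z_m = …`, where the right-hand side involves only lower order coefficients and
`W_m`. For `r` in the interval, `k(r)` is not an integer and `D_{Z,1} ≠ 0`, while `D_W > 0` at `P_s`
because `r < r*(γ)`. Thus no denominator of the recursion vanishes, all coefficients are continuous
in `r`, and the Taylor coefficients satisfy the Leibniz identities expressing the two equations
(`Wc_eqn`, `Zc_eqn`); for orders `0` and `1` this rests on algebraic identities between the explicit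
`W₀, Z₀, W₁, Z₁` (`DZ_sonic`, `NZ_sonic`, `W₁_eqn`, `Z₁_eqn`).

For the growth estimate put `c_i = (|W_i| + |Z_i|) / i!`. The recursion then bounds `c_{m+2}` by a
constant times `c_{m+1}` plus convolutions of lower terms (`cSize_rec`). In the convolution coming
from `D_Z Z'` the total index is `m + 3` and there is an extra factor `m + 3`, which the small
divisor `m + 2 - k(r)` compensates (`mul_inv_sub_le`). The constant is uniform by compactness of the
interval. Since the Catalan numbers `C_i` satisfy the corresponding quadratic recursion, induction
gives `c_i ≤ M C_i L^{2i-3}` (`majorant`); the power of `L` provides the gain that absorbs the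
constant, also in the convolution of total index `m + 3`. As `C_i ≤ 4^i`, this is the claimed bound.

The rest is the theory of power series. The Leibniz identities say that the exponential generating
series satisfy the system formally; evaluation at `|ξ| < 1 / C` respects sums, products and
differentiation, so the sums solve the system (`Admissible.isOdeSolutionOn`). Continuity in `r` is
the Weierstrass test (`continuousOn_serSum`).
-/

noncomputable section

open Real Filter Set Topology

namespace SelfSimilarImplosion

/-- `α = (γ−1)/2`. -/
def alphaF (γ : ℝ) : ℝ := (γ - 1) / 2

/-- `D_W(W,Z) = 1 + (1/2)(W + Z + α(W − Z))`. -/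
def DW (γ W Z : ℝ) : ℝ := 1 + (1 / 2) * (W + Z + alphaF γ * (W - Z))

/-- `D_Z(W,Z) = 1 + (1/2)(W + Z − α(W − Z))`. -/
def DZ (γ W Z : ℝ) : ℝ := 1 + (1 / 2) * (W + Z - alphaF γ * (W - Z))

/-- `N_W(W,Z) = −(r + (1/2)((1+2α)W + (1−α)Z))·W + (α/2)Z²`. -/
def NW (γ r W Z : ℝ) : ℝ :=
  -(r + (1 / 2) * ((1 + 2 * alphaF γ) * W + (1 - alphaF γ) * Z)) * W + (alphaF γ / 2) * Z ^ 2

/-- `N_Z(W,Z) = −(r + (1/2)((1−α)W + (1+2α)Z))·Z + (α/2)W²`. -/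
def NZ (γ r W Z : ℝ) : ℝ :=
  -(r + (1 / 2) * ((1 - alphaF γ) * W + (1 + 2 * alphaF γ) * Z)) * Z + (alphaF γ / 2) * W ^ 2

/-- The critical self-similar exponent `r*(γ)`. -/
def rStar (γ : ℝ) : ℝ :=
  if γ < 5 / 3 then 1 + 2 / (Real.sqrt (2 / (γ - 1)) + 1) ^ 2
  else (3 * γ - 1) / (2 + Real.sqrt 3 * (γ - 1))

/-- `ℛ₁`. -/
def R1 (γ r : ℝ) : ℝ :=
  Real.sqrt (γ ^ 2 * (r - 3) ^ 2 - 2 * γ * (3 * r ^ 2 - 6 * r + 7) + 9 * r ^ 2 - 14 * r + 9)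

/-- First coordinate `W₀` of the sonic point `P_s`. -/
def W₀ (γ r : ℝ) : ℝ :=
  (γ ^ 2 * r + (γ + 1) * R1 γ r - 3 * γ ^ 2 - 2 * γ * r + 10 * γ - 3 * r - 3) / (4 * (γ - 1) ^ 2)

/-- Second coordinate `Z₀` of the sonic point `P_s`. -/
def Z₀ (γ r : ℝ) : ℝ :=
  (γ ^ 2 * r + (γ - 3) * R1 γ r - 3 * γ ^ 2 - 6 * γ * r + 6 * γ + 9 * r - 7) / (4 * (γ - 1) ^ 2)

/-- `ℛ₂`. -/
def R2 (γ r : ℝ) : ℝ :=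
  (1 / (γ - 1)) *
    Real.sqrt (γ * ((76 - 27 * γ) * γ - 71) - (3 * γ - 5) * ((γ - 5) * γ + 2) * r ^ 2
      + (γ * (γ * (18 * γ - 52) + 50) - 8) * r
      + R1 γ r * (9 * (γ - 2) * γ + ((2 - 3 * γ) * γ + 5) * r + 5) + 18)

/-- The first Taylor coefficient `W₁`. -/
def W₁ (γ r : ℝ) : ℝ :=
  (γ * (-3 * (R1 γ r + 6) - 3 * γ * (r - 3) + 2 * r) + R1 γ r + 5 * r + 5) / (4 * (γ - 1) ^ 2)

/-- The first Taylor coefficient `Z₁`. -/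
def Z₁ (γ r : ℝ) : ℝ :=
  (-(3 * γ ^ 3 - 7 * γ ^ 2 + γ + 11) * r
      + γ * (γ * (9 * γ - 3 * R1 γ r - 25) + 10 * R1 γ r - 4 * (γ - 1) * R2 γ r + 27)
      - 3 * R1 γ r + 4 * (γ - 1) * R2 γ r - 3)
    / (4 * (γ - 1) ^ 2 * (γ + 1))

/-- The eigenvalue-ratio function `k(r)`. -/
def kFun (γ r : ℝ) : ℝ :=
  (-4 + (1 + γ) * (r - 1) / (γ - 1) - R2 γ r) / (-4 + (1 + γ) * (r - 1) / (γ - 1) + R2 γ r)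


/-- The self-similar profile equation for a function `𝒲` of `ζ`. -/
def ProfileEqn (γ r : ℝ) (Wc : ℝ → ℝ) (ζ : ℝ) : Prop :=
  (r - 1) * Wc ζ
      + (ζ + (1 / 2) * (Wc ζ - Wc (-ζ) + alphaF γ * (Wc ζ + Wc (-ζ)))) * deriv Wc ζ
      + (alphaF γ / (2 * ζ)) * ((Wc ζ) ^ 2 - (Wc (-ζ)) ^ 2) = 0

/-- `(W, Z)` solves the autonomous ODE system on the set `s`. -/
def IsOdeSolutionOn (γ r : ℝ) (W Z : ℝ → ℝ) (s : Set ℝ) : Prop :=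
  ∀ ξ ∈ s,
    DW γ (W ξ) (Z ξ) * deriv W ξ = NW γ r (W ξ) (Z ξ) ∧
    DZ γ (W ξ) (Z ξ) * deriv Z ξ = NZ γ r (W ξ) (Z ξ)

/-- The `Z`-partial derivative of `N_Z` at `(W, Z)`. -/
def pZNZ (γ r W Z : ℝ) : ℝ :=
  -(r + (1 / 2) * ((1 - alphaF γ) * W + (1 + 2 * alphaF γ) * Z)) - ((1 + 2 * alphaF γ) / 2) * Z

/-- `∂_W N_W(W,Z)`. -/
def gradNW1 (γ r W Z : ℝ) : ℝ := -r - (1 + 2 * alphaF γ) * W - ((1 - alphaF γ) / 2) * Z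

/-- `∂_Z N_W(W,Z)`. -/
def gradNW2 (γ W Z : ℝ) : ℝ := -((1 - alphaF γ) / 2) * W + alphaF γ * Z

/-- `∂_W N_Z(W,Z)`. -/
def gradNZ1 (γ W Z : ℝ) : ℝ := alphaF γ * W - ((1 - alphaF γ) / 2) * Z

/-- `∂_Z N_Z(W,Z)`. -/
def gradNZ2 (γ r W Z : ℝ) : ℝ := -r - ((1 - alphaF γ) / 2) * W - (1 + 2 * alphaF γ) * Z

/-- The quadratic form `(a,b)·HN_W·(c,d)ᵀ` of the constant Hessian of `N_W`. -/
def hessNW (γ a b c d : ℝ) : ℝ :=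
  -(1 + 2 * alphaF γ) * a * c - ((1 - alphaF γ) / 2) * (a * d + b * c) + alphaF γ * b * d

/-- The quadratic form `(a,b)·HN_Z·(c,d)ᵀ` of the constant Hessian of `N_Z`. -/
def hessNZ (γ a b c d : ℝ) : ℝ :=
  alphaF γ * a * c - ((1 - alphaF γ) / 2) * (a * d + b * c) - (1 + 2 * alphaF γ) * b * d

/-- `D_{W,m}` computed from the sequences `(W_m)`, `(Z_m)`. -/
def DWseq (γ : ℝ) (Ws Zs : ℕ → ℝ) : ℕ → ℝ
  | 0 => DW γ (Ws 0) (Zs 0)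
  | m + 1 => ((1 + alphaF γ) / 2) * Ws (m + 1) + ((1 - alphaF γ) / 2) * Zs (m + 1)

/-- `D_{Z,m}` computed from the sequences `(W_m)`, `(Z_m)`. -/
def DZseq (γ : ℝ) (Ws Zs : ℕ → ℝ) : ℕ → ℝ
  | 0 => DZ γ (Ws 0) (Zs 0)
  | m + 1 => ((1 - alphaF γ) / 2) * Ws (m + 1) + ((1 + alphaF γ) / 2) * Zs (m + 1)

/-- `N_{W,m}` computed from the sequences `(W_m)`, `(Z_m)`. -/
def NWseq (γ r : ℝ) (Ws Zs : ℕ → ℝ) : ℕ → ℝ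
  | 0 => NW γ r (Ws 0) (Zs 0)
  | m + 1 =>
      gradNW1 γ r (Ws 0) (Zs 0) * Ws (m + 1) + gradNW2 γ (Ws 0) (Zs 0) * Zs (m + 1)
        + ∑ j ∈ Finset.Ico 1 (m + 1),
            (Nat.choose m (j - 1) : ℝ) * hessNW γ (Ws (m + 1 - j)) (Zs (m + 1 - j)) (Ws j) (Zs j)

/-- `N_{Z,m}` computed from the sequences `(W_m)`, `(Z_m)`. -/
def NZseq (γ r : ℝ) (Ws Zs : ℕ → ℝ) : ℕ → ℝ
  | 0 => NZ γ r (Ws 0) (Zs 0)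
  | m + 1 =>
      gradNZ1 γ (Ws 0) (Zs 0) * Ws (m + 1) + gradNZ2 γ r (Ws 0) (Zs 0) * Zs (m + 1)
        + ∑ j ∈ Finset.Ico 1 (m + 1),
            (Nat.choose m (j - 1) : ℝ) * hessNZ γ (Ws (m + 1 - j)) (Zs (m + 1 - j)) (Ws j) (Zs j)

/-- The recursively defined Taylor coefficients `(W_m, Z_m)` of the smooth solution at the
sonic point `P_s`, following Proposition 2.2 (`eq:Wn`–`eq:Zn`). -/
def coeff (γ r : ℝ) : ℕ → ℝ × ℝ
  | 0 => (W₀ γ r, Z₀ γ r)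
  | 1 => (W₁ γ r, Z₁ γ r)
  | m + 2 =>
      let pW : ℕ → ℝ := fun j => if _h : j < m + 2 then (coeff γ r j).1 else 0
      let pZ : ℕ → ℝ := fun j => if _h : j < m + 2 then (coeff γ r j).2 else 0
      let newW : ℝ :=
        (NWseq γ r pW pZ (m + 1)
            - ∑ j ∈ Finset.range (m + 1),
                (Nat.choose (m + 1) j : ℝ) * DWseq γ pW pZ (m + 1 - j) * pW (j + 1))
          / DWseq γ pW pZ 0
      let newZ : ℝ :=
        (-(∑ j ∈ Finset.Ico 1 (m + 1),
              (Nat.choose (m + 2) j : ℝ) * DZseq γ pW pZ (m + 2 - j) * pZ (j + 1))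
            + (gradNZ1 γ (pW 0) (pZ 0) * newW
                + ∑ j ∈ Finset.Ico 1 (m + 2),
                    (Nat.choose (m + 1) (j - 1) : ℝ)
                      * hessNZ γ (pW (m + 2 - j)) (pZ (m + 2 - j)) (pW j) (pZ j))
            - Z₁ γ r * newW * ((1 - alphaF γ) / 2))
          / (DZseq γ pW pZ 1 * (((m : ℝ) + 2) - kFun γ r))
      (newW, newZ)
  termination_by n => n
  decreasing_by all_goals omega

/-- The power series `W^{(r)}(ξ) = Σ_{i≥0} W_i ξ^i / i!`. -/
def Wfun (γ r ξ : ℝ) : ℝ := ∑' i : ℕ, (coeff γ r i).1 * ξ ^ i / (Nat.factorial i : ℝ)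

/-- The power series `Z^{(r)}(ξ) = Σ_{i≥0} Z_i ξ^i / i!`. -/
def Zfun (γ r ξ : ℝ) : ℝ := ∑' i : ℕ, (coeff γ r i).2 * ξ ^ i / (Nat.factorial i : ℝ)

/-! ### The sonic point and the first-order coefficients -/

/-- The constraint `r < r*(γ)`, in both regimes of `γ`, puts `r - 1` below `2u²/(1+u)²`, where
`u = √((γ-1)/2)`. That bound is the smaller root of the radicand of `ℛ₁`; it equals `r*(γ) - 1`
for `γ < 5/3`, and exceeds it for `γ ≥ 5/3` by a multiple of `(√3 u - 1)²`. -/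
lemma exists_param {γ r : ℝ} (hγ : 1 < γ) (hr : r < rStar γ) :
    ∃ u : ℝ, 0 < u ∧ γ = 1 + 2 * u ^ 2 ∧ (1 + u) ^ 2 * (r - 1) < 2 * u ^ 2 := by
  have hpos : 0 < (γ - 1) / 2 := by linarith
  obtain ⟨u, hu, hu2⟩ : ∃ u : ℝ, 0 < u ∧ u ^ 2 = (γ - 1) / 2 :=
    ⟨√((γ - 1) / 2), Real.sqrt_pos.2 hpos, Real.sq_sqrt hpos.le⟩
  have hγu : γ = 1 + 2 * u ^ 2 := by linarith
  refine ⟨u, hu, hγu, ?_⟩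
  unfold rStar at hr
  split_ifs at hr with h
  · have hs : √(2 / (γ - 1)) = 1 / u := by
      rw [hγu, show 2 / (1 + 2 * u ^ 2 - 1) = (1 / u) ^ 2 by field_simp; ring]
      exact Real.sqrt_sq (by positivity)
    rw [hs, show 1 + 2 / (1 / u + 1) ^ 2 = 1 + 2 * u ^ 2 / (1 + u) ^ 2 by field_simp] at hr
    have h2 : r - 1 < 2 * u ^ 2 / (1 + u) ^ 2 := by linarith
    rw [lt_div_iff₀ (by positivity)] at h2
    linarith
  · have h3 : √3 ^ 2 = (3 : ℝ) := Real.sq_sqrt (by norm_num)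
    have h31 : (1 : ℝ) < √3 := by
      rw [Real.lt_sqrt (by norm_num)]; norm_num
    set s := √3
    have hden : 0 < 2 + s * (γ - 1) := by
      have : 0 < s * (γ - 1) := mul_pos (by linarith) (by linarith)
      linarith
    rw [lt_div_iff₀ hden, hγu] at hr
    have h4 : (r - 1) * (1 + s * u ^ 2) < (3 - s) * u ^ 2 := by linarith
    have h5 : (1 + u) ^ 2 * (3 - s) ≤ 2 * (1 + s * u ^ 2) := by
      have : 0 ≤ (s - 1) * (s * u - 1) ^ 2 := mul_nonneg (by linarith) (sq_nonneg _)
      nlinarith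
    have hp : 0 < 1 + s * u ^ 2 := by positivity
    have h6 := mul_lt_mul_of_pos_left h4 (show 0 < (1 + u) ^ 2 by positivity)
    have h7 := mul_le_mul_of_nonneg_right h5 (sq_nonneg u)
    have h8 : ((1 + u) ^ 2 * (r - 1)) * (1 + s * u ^ 2) < (2 * u ^ 2) * (1 + s * u ^ 2) := by
      nlinarith
    exact lt_of_mul_lt_mul_right h8 hp.le

lemma R1_sq {γ r : ℝ} (hγ : 1 < γ) (hr1 : 1 < r) (hr : r < rStar γ) :
    R1 γ r ^ 2 =
      γ ^ 2 * (r - 3) ^ 2 - 2 * γ * (3 * r ^ 2 - 6 * r + 7) + 9 * r ^ 2 - 14 * r + 9 := by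
  obtain ⟨u, hu, hγu, h⟩ := exists_param hγ hr
  refine Real.sq_sqrt ?_
  have h2 : (1 - u) ^ 2 * (r - 1) < 2 * u ^ 2 := by nlinarith [mul_pos hu (sub_pos.2 hr1)]
  have h3 := mul_pos (sub_pos.2 h) (sub_pos.2 h2)
  -- In terms of `u` the radicand factors.
  have h4 : γ ^ 2 * (r - 3) ^ 2 - 2 * γ * (3 * r ^ 2 - 6 * r + 7) + 9 * r ^ 2 - 14 * r + 9
      = 4 * ((2 * u ^ 2 - (1 + u) ^ 2 * (r - 1)) * (2 * u ^ 2 - (1 - u) ^ 2 * (r - 1))) := by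
    rw [hγu]; ring
  rw [h4]; linarith

lemma DZ_sonic {γ : ℝ} (r : ℝ) (hγ : 1 < γ) : DZ γ (W₀ γ r) (Z₀ γ r) = 0 := by
  have : γ - 1 ≠ 0 := by linarith
  unfold DZ W₀ Z₀ alphaF
  field_simp
  ring

lemma DW_sonic_pos {γ r : ℝ} (hγ : 1 < γ) (hr1 : 1 < r) (hr : r < rStar γ) :
    0 < DW γ (W₀ γ r) (Z₀ γ r) := by
  have h0 : γ - 1 ≠ 0 := by linarith
  have h1 : DW γ (W₀ γ r) (Z₀ γ r) = (γ + 1 + (γ - 3) * r + R1 γ r) / (2 * (γ - 1)) := by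
    unfold DW W₀ Z₀ alphaF
    field_simp
    ring
  obtain ⟨u, hu, hγu, h⟩ := exists_param hγ hr
  have h2 : 0 ≤ R1 γ r := Real.sqrt_nonneg _
  have h3 : 0 < γ + 1 + (γ - 3) * r := by
    have : 0 < u * (r - 1) := mul_pos hu (sub_pos.2 hr1)
    have : 0 ≤ u ^ 2 * (r - 1) := by
      have := sub_pos.2 hr1
      positivity
    rw [hγu]; nlinarith
  rw [h1]
  exact div_pos (by linarith) (by linarith)

/-- `D_{Z,1}` is `-1/4` times the denominator of `k(r)`. -/
lemma DZ1_eq {γ : ℝ} (r : ℝ) (hγ : 1 < γ) :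
    (1 - alphaF γ) / 2 * W₁ γ r + (1 + alphaF γ) / 2 * Z₁ γ r
      = -(-4 + (1 + γ) * (r - 1) / (γ - 1) + R2 γ r) / 4 := by
  have : γ - 1 ≠ 0 := by linarith
  have : γ + 1 ≠ 0 := by linarith
  unfold W₁ Z₁ alphaF
  field_simp
  ring

/-- `∂_Z N_Z - Z₁ ∂_Z D_Z` at the sonic point is `-1/4` times the numerator of `k(r)`. -/
lemma gradNZ2_sub_eq {γ : ℝ} (r : ℝ) (hγ : 1 < γ) :
    gradNZ2 γ r (W₀ γ r) (Z₀ γ r) - (1 + alphaF γ) / 2 * Z₁ γ r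
      = -(-4 + (1 + γ) * (r - 1) / (γ - 1) - R2 γ r) / 4 := by
  have : γ - 1 ≠ 0 := by linarith
  have : γ + 1 ≠ 0 := by linarith
  unfold gradNZ2 W₀ Z₀ Z₁ alphaF
  field_simp
  ring

lemma NZ_sonic {γ r : ℝ} (hγ : 1 < γ) (hr1 : 1 < r) (hr : r < rStar γ) :
    NZ γ r (W₀ γ r) (Z₀ γ r) = 0 := by
  have : γ - 1 ≠ 0 := by linarith
  have hx := R1_sq hγ hr1 hr
  unfold NZ W₀ Z₀ alphaF
  field_simp
  linear_combination 8 * (γ - 1) ^ 2 * hx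

lemma W₁_eqn {γ r : ℝ} (hγ : 1 < γ) (hr1 : 1 < r) (hr : r < rStar γ) :
    DW γ (W₀ γ r) (Z₀ γ r) * W₁ γ r = NW γ r (W₀ γ r) (Z₀ γ r) := by
  have : γ - 1 ≠ 0 := by linarith
  have hx := R1_sq hγ hr1 hr
  unfold DW NW W₀ Z₀ W₁ alphaF
  field_simp
  linear_combination -8 * (γ - 1) ^ 2 * hx

/-- The quadratic equation for `Z₁`. It needs the radicand of `ℛ₂` to be nonnegative; otherwise the
junk value of the square root would make `ℛ₂ = 0`. -/
lemma Z₁_eqn {γ r : ℝ} (hγ : 1 < γ) (hr1 : 1 < r) (hr : r < rStar γ) (hR2 : R2 γ r ≠ 0) :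
    ((1 - alphaF γ) / 2 * W₁ γ r + (1 + alphaF γ) / 2 * Z₁ γ r) * Z₁ γ r
      = gradNZ1 γ (W₀ γ r) (Z₀ γ r) * W₁ γ r + gradNZ2 γ r (W₀ γ r) (Z₀ γ r) * Z₁ γ r := by
  have h0 : γ - 1 ≠ 0 := by linarith
  have : γ + 1 ≠ 0 := by linarith
  have hx := R1_sq hγ hr1 hr
  have hy : ((γ - 1) * R2 γ r) ^ 2 = γ * ((76 - 27 * γ) * γ - 71)
      - (3 * γ - 5) * ((γ - 5) * γ + 2) * r ^ 2 + (γ * (γ * (18 * γ - 52) + 50) - 8) * r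
      + R1 γ r * (9 * (γ - 2) * γ + ((2 - 3 * γ) * γ + 5) * r + 5) + 18 := by
    unfold R2 at hR2 ⊢
    rw [← mul_assoc, mul_one_div_cancel h0, one_mul]
    exact Real.sq_sqrt (Real.sqrt_ne_zero'.1 (right_ne_zero_of_mul hR2)).le
  rw [DZ1_eq r hγ]
  unfold gradNZ1 gradNZ2 W₀ Z₀ W₁ Z₁ alphaF
  field_simp
  linear_combination 16 * (γ - 1) ^ 2 * hy + 16 * (γ - 1) ^ 2 * (3 * γ - 1) * hx

/-- Since `k(r)` lies strictly between consecutive integers, it is neither `0` nor `1`; hence its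
denominator and `ℛ₂` do not vanish. -/
lemma den_ne_zero_and_R2_ne_zero {γ r : ℝ} {n : ℕ} (h1 : (n : ℝ) < kFun γ r)
    (h2 : kFun γ r < (n : ℝ) + 1) :
    -4 + (1 + γ) * (r - 1) / (γ - 1) + R2 γ r ≠ 0 ∧ R2 γ r ≠ 0 := by
  have hk : ∀ m : ℕ, kFun γ r ≠ m := by
    rintro m hm
    rw [hm] at h1 h2
    have h1' : n < m := by exact_mod_cast h1
    have h2' : m < n + 1 := by exact_mod_cast h2
    omega
  have hden : -4 + (1 + γ) * (r - 1) / (γ - 1) + R2 γ r ≠ 0 := by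
    intro h
    exact hk 0 (by rw [kFun, h]; simp)
  refine ⟨hden, fun h => hk 1 ?_⟩
  rw [h] at hden
  rw [kFun, h, sub_zero, add_zero, div_self (by simpa using hden)]
  simp

/-! ### The recursion as an identity between formal power series -/

/-- The sequence `(W_i)`. -/
noncomputable def Wc (γ r : ℝ) (i : ℕ) : ℝ := (coeff γ r i).1

/-- The sequence `(Z_i)`. -/
noncomputable def Zc (γ r : ℝ) (i : ℕ) : ℝ := (coeff γ r i).2

lemma DWseq_congr {γ : ℝ} {f g f' g' : ℕ → ℝ} {n : ℕ} (h : f n = f' n ∧ g n = g' n) :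
    DWseq γ f g n = DWseq γ f' g' n := by
  cases n <;> simp only [DWseq, h.1, h.2]

lemma DZseq_congr {γ : ℝ} {f g f' g' : ℕ → ℝ} {n : ℕ} (h : f n = f' n ∧ g n = g' n) :
    DZseq γ f g n = DZseq γ f' g' n := by
  cases n <;> simp only [DZseq, h.1, h.2]

lemma NWseq_congr {γ r : ℝ} {f g f' g' : ℕ → ℝ} {n : ℕ} (h : ∀ i ≤ n, f i = f' i ∧ g i = g' i) :
    NWseq γ r f g n = NWseq γ r f' g' n := by
  cases n with
  | zero => simp only [NWseq, h 0 le_rfl]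
  | succ n =>
    simp only [NWseq, h 0 (Nat.zero_le _), h (n + 1) le_rfl]
    congr 1
    refine Finset.sum_congr rfl fun j hj => ?_
    rw [Finset.mem_Ico] at hj
    rw [(h j (by omega)).1, (h j (by omega)).2, (h (n + 1 - j) (by omega)).1,
      (h (n + 1 - j) (by omega)).2]

/-- The recursion for `W_{m+2}`, free of the truncations used to define `coeff`. -/
lemma Wc_rec (γ r : ℝ) (m : ℕ) :
    Wc γ r (m + 2) = (NWseq γ r (Wc γ r) (Zc γ r) (m + 1)
      - ∑ j ∈ Finset.range (m + 1), (Nat.choose (m + 1) j : ℝ)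
          * DWseq γ (Wc γ r) (Zc γ r) (m + 1 - j) * Wc γ r (j + 1))
        / DW γ (W₀ γ r) (Z₀ γ r) := by
  have h0 : DW γ (W₀ γ r) (Z₀ γ r) = DWseq γ (Wc γ r) (Zc γ r) 0 := by
    simp [DWseq, Wc, Zc, coeff]
  rw [h0, Wc, coeff]
  have hp : ∀ i < m + 2, (if _h : i < m + 2 then (coeff γ r i).1 else 0) = Wc γ r i ∧
      (if _h : i < m + 2 then (coeff γ r i).2 else 0) = Zc γ r i := fun i hi => by
    simp [hi, Wc, Zc]
  refine congrArg₂ (· / ·) (congrArg₂ (· - ·) (NWseq_congr fun i hi => hp i (by omega))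
    (Finset.sum_congr rfl fun j hj => ?_)) (DWseq_congr (hp 0 (by omega)))
  rw [Finset.mem_range] at hj
  exact congrArg₂ (· * ·) (congrArg₂ (· * ·) rfl (DWseq_congr (hp (m + 1 - j) (by omega))))
    (hp (j + 1) (by omega)).1

/-- The recursion for `Z_{m+2}`, free of the truncations used to define `coeff`. -/
lemma Zc_rec (γ r : ℝ) (m : ℕ) :
    Zc γ r (m + 2) = (-(∑ j ∈ Finset.Ico 1 (m + 1), (Nat.choose (m + 2) j : ℝ)
              * DZseq γ (Wc γ r) (Zc γ r) (m + 2 - j) * Zc γ r (j + 1))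
            + (gradNZ1 γ (W₀ γ r) (Z₀ γ r) * Wc γ r (m + 2)
                + ∑ j ∈ Finset.Ico 1 (m + 2), (Nat.choose (m + 1) (j - 1) : ℝ)
                    * hessNZ γ (Wc γ r (m + 2 - j)) (Zc γ r (m + 2 - j)) (Wc γ r j) (Zc γ r j))
            - Z₁ γ r * Wc γ r (m + 2) * ((1 - alphaF γ) / 2))
        / (((1 - alphaF γ) / 2 * W₁ γ r + (1 + alphaF γ) / 2 * Z₁ γ r)
            * (((m : ℝ) + 2) - kFun γ r)) := by
  have h0 : (1 - alphaF γ) / 2 * W₁ γ r + (1 + alphaF γ) / 2 * Z₁ γ r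
      = DZseq γ (Wc γ r) (Zc γ r) 1 := by
    simp [DZseq, Wc, Zc, coeff]
  have hp : ∀ i < m + 2, (if _h : i < m + 2 then (coeff γ r i).1 else 0) = Wc γ r i ∧
      (if _h : i < m + 2 then (coeff γ r i).2 else 0) = Zc γ r i := fun i hi => by
    simp [hi, Wc, Zc]
  have h00 : W₀ γ r = Wc γ r 0 ∧ Z₀ γ r = Zc γ r 0 := by simp [Wc, Zc, coeff]
  have key : ∀ f g : ℕ → ℝ, (∀ i < m + 2, f i = Wc γ r i ∧ g i = Zc γ r i) → ∀ w : ℝ,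
      (-(∑ j ∈ Finset.Ico 1 (m + 1), (Nat.choose (m + 2) j : ℝ)
              * DZseq γ f g (m + 2 - j) * g (j + 1))
            + (gradNZ1 γ (f 0) (g 0) * w
                + ∑ j ∈ Finset.Ico 1 (m + 2), (Nat.choose (m + 1) (j - 1) : ℝ)
                    * hessNZ γ (f (m + 2 - j)) (g (m + 2 - j)) (f j) (g j))
            - Z₁ γ r * w * ((1 - alphaF γ) / 2))
        / (DZseq γ f g 1 * (((m : ℝ) + 2) - kFun γ r))
      = (-(∑ j ∈ Finset.Ico 1 (m + 1), (Nat.choose (m + 2) j : ℝ)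
              * DZseq γ (Wc γ r) (Zc γ r) (m + 2 - j) * Zc γ r (j + 1))
            + (gradNZ1 γ (W₀ γ r) (Z₀ γ r) * w
                + ∑ j ∈ Finset.Ico 1 (m + 2), (Nat.choose (m + 1) (j - 1) : ℝ)
                    * hessNZ γ (Wc γ r (m + 2 - j)) (Zc γ r (m + 2 - j)) (Wc γ r j) (Zc γ r j))
            - Z₁ γ r * w * ((1 - alphaF γ) / 2))
        / (DZseq γ (Wc γ r) (Zc γ r) 1 * (((m : ℝ) + 2) - kFun γ r)) := by
    intro f g h w
    rw [h00.1, h00.2, (h 0 (by omega)).1, (h 0 (by omega)).2, DZseq_congr (h 1 (by omega))]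
    have e1 : ∀ j ∈ Finset.Ico 1 (m + 1), (Nat.choose (m + 2) j : ℝ)
        * DZseq γ f g (m + 2 - j) * g (j + 1) = (Nat.choose (m + 2) j : ℝ)
        * DZseq γ (Wc γ r) (Zc γ r) (m + 2 - j) * Zc γ r (j + 1) := fun j hj => by
      rw [Finset.mem_Ico] at hj
      rw [(h (j + 1) (by omega)).2, DZseq_congr (h (m + 2 - j) (by omega))]
    have e2 : ∀ j ∈ Finset.Ico 1 (m + 2), (Nat.choose (m + 1) (j - 1) : ℝ)
        * hessNZ γ (f (m + 2 - j)) (g (m + 2 - j)) (f j) (g j)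
        = (Nat.choose (m + 1) (j - 1) : ℝ)
        * hessNZ γ (Wc γ r (m + 2 - j)) (Zc γ r (m + 2 - j)) (Wc γ r j) (Zc γ r j) :=
      fun j hj => by
        rw [Finset.mem_Ico] at hj
        rw [(h j (by omega)).1, (h j (by omega)).2, (h (m + 2 - j) (by omega)).1,
          (h (m + 2 - j) (by omega)).2]
    rw [Finset.sum_congr rfl e1, Finset.sum_congr rfl e2]
  rw [h0]
  refine Eq.trans ?_ (key _ _ hp _)
  rw [show Zc γ r (m + 2) = (coeff γ r (m + 2)).2 from rfl,
    show Wc γ r (m + 2) = (coeff γ r (m + 2)).1 from rfl, coeff.eq_3]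

/-- The Taylor equation of order `m` for `D_W W' = N_W`. -/
lemma Wc_eqn {γ r : ℝ} (hD : DW γ (W₀ γ r) (Z₀ γ r) ≠ 0)
    (h1 : DW γ (W₀ γ r) (Z₀ γ r) * W₁ γ r = NW γ r (W₀ γ r) (Z₀ γ r)) (m : ℕ) :
    ∑ j ∈ Finset.range (m + 1), (Nat.choose m j : ℝ) * DWseq γ (Wc γ r) (Zc γ r) (m - j)
        * Wc γ r (j + 1) = NWseq γ r (Wc γ r) (Zc γ r) m := by
  cases m with
  | zero => simpa [DWseq, NWseq, Wc, Zc, coeff] using h1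
  | succ m =>
    have h0 : DWseq γ (Wc γ r) (Zc γ r) 0 = DW γ (W₀ γ r) (Z₀ γ r) := by
      simp [DWseq, Wc, Zc, coeff]
    have h := Wc_rec γ r m
    rw [eq_div_iff hD] at h
    rw [Finset.sum_range_succ, Nat.sub_self, Nat.choose_self, h0]
    push_cast
    linear_combination h

/-- The Taylor equation of order `m` for `D_Z Z' = N_Z`. Since `D_{Z,0} = 0`, the coefficient
`Z_{m+1}` drops out, and `k(r)` is such that `Z_m` is multiplied by `D_{Z,1} (m - k(r))`. -/
lemma Zc_eqn {γ r : ℝ} (hD0 : DZ γ (W₀ γ r) (Z₀ γ r) = 0) (hN0 : NZ γ r (W₀ γ r) (Z₀ γ r) = 0)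
    (hD1 : (1 - alphaF γ) / 2 * W₁ γ r + (1 + alphaF γ) / 2 * Z₁ γ r ≠ 0)
    (h1 : ((1 - alphaF γ) / 2 * W₁ γ r + (1 + alphaF γ) / 2 * Z₁ γ r) * Z₁ γ r
      = gradNZ1 γ (W₀ γ r) (Z₀ γ r) * W₁ γ r + gradNZ2 γ r (W₀ γ r) (Z₀ γ r) * Z₁ γ r)
    (hk : ((1 - alphaF γ) / 2 * W₁ γ r + (1 + alphaF γ) / 2 * Z₁ γ r) * kFun γ r
      = gradNZ2 γ r (W₀ γ r) (Z₀ γ r) - (1 + alphaF γ) / 2 * Z₁ γ r)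
    (hkm : ∀ m : ℕ, ((m : ℝ) + 2) - kFun γ r ≠ 0) (m : ℕ) :
    ∑ j ∈ Finset.range (m + 1), (Nat.choose m j : ℝ) * DZseq γ (Wc γ r) (Zc γ r) (m - j)
        * Zc γ r (j + 1) = NZseq γ r (Wc γ r) (Zc γ r) m := by
  have e0 : Wc γ r 0 = W₀ γ r ∧ Zc γ r 0 = Z₀ γ r := by simp [Wc, Zc, coeff]
  have e1 : Wc γ r 1 = W₁ γ r ∧ Zc γ r 1 = Z₁ γ r := by simp [Wc, Zc, coeff]
  have hD0' : DZseq γ (Wc γ r) (Zc γ r) 0 = 0 := by rw [DZseq, e0.1, e0.2, hD0]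
  match m with
  | 0 => simp [hD0', NZseq, e0, hN0]
  | 1 =>
    simp [Finset.sum_range_succ, NZseq, DZseq, e0, e1, h1, hD0]
  | m + 2 =>
    have h := Zc_rec γ r m
    rw [eq_div_iff (mul_ne_zero hD1 (hkm m))] at h
    rw [Finset.sum_range_succ, Finset.sum_range_succ, Nat.sub_self, hD0',
      Finset.range_eq_Ico, Finset.sum_eq_sum_Ico_succ_bot (by omega),
      show m + 2 - (m + 1) = 1 by omega, NZseq, e0.1, e0.2, Nat.choose_succ_self_right,
      Nat.choose_zero_right, Nat.sub_zero, DZseq, DZseq, e1.1, zero_add, e1.2]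
    push_cast
    linear_combination h + Zc γ r (m + 2) * hk

open PowerSeries in
/-- The exponential generating series `∑ f_i X^i / i!`. Its derivative is the series of the
shifted sequence `i ↦ f_{i+1}`. -/
noncomputable def ser (f : ℕ → ℝ) : ℝ⟦X⟧ := PowerSeries.mk fun i => f i / (i.factorial : ℝ)

lemma coeff_ser_mul (f g : ℕ → ℝ) (m : ℕ) :
    PowerSeries.coeff m (ser f * ser g)
      = (∑ j ∈ Finset.range (m + 1), (Nat.choose m j : ℝ) * f (m - j) * g j)
          / (m.factorial : ℝ) := by
  rw [mul_comm, PowerSeries.coeff_mul, Finset.Nat.sum_antidiagonal_eq_sum_range_succ_mk,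
    Finset.sum_div]
  refine Finset.sum_congr rfl fun j hj => ?_
  have hj' : j ≤ m := by rw [Finset.mem_range] at hj; omega
  simp only [ser, PowerSeries.coeff_mk]
  rw [Nat.cast_choose ℝ hj']
  have := Nat.factorial_ne_zero
  field_simp

/-- The sum with weights `binom(m, j-1)` that enters `N_{∘,m+1}` is one half of a Leibniz sum,
up to its end terms. -/
lemma sum_choose_symm (f g : ℕ → ℝ) (m : ℕ) :
    (∑ j ∈ Finset.Ico 1 (m + 1), (Nat.choose m (j - 1) : ℝ) * (f (m + 1 - j) * g j))
      + (∑ j ∈ Finset.Ico 1 (m + 1), (Nat.choose m (j - 1) : ℝ) * (g (m + 1 - j) * f j))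
      = PowerSeries.coeff (m + 1) (ser f * ser g) * ((m + 1).factorial : ℝ)
        - f 0 * g (m + 1) - f (m + 1) * g 0 := by
  have h1 : ∑ j ∈ Finset.Ico 1 (m + 1), (Nat.choose m (j - 1) : ℝ) * (g (m + 1 - j) * f j)
      = ∑ j ∈ Finset.Ico 1 (m + 1), (Nat.choose m j : ℝ) * (f (m + 1 - j) * g j) := by
    refine Finset.sum_nbij' (fun j => m + 1 - j) (fun j => m + 1 - j) ?_ ?_ ?_ ?_ ?_
    · intro j hj; simp only [Finset.mem_Ico] at hj ⊢; omega
    · intro j hj; simp only [Finset.mem_Ico] at hj ⊢; omega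
    · intro j hj; simp only [Finset.mem_Ico] at hj ⊢; omega
    · intro j hj; simp only [Finset.mem_Ico] at hj ⊢; omega
    · intro j hj
      simp only [Finset.mem_Ico] at hj
      rw [show m + 1 - (m + 1 - j) = j by omega,
        show m + 1 - j = m - (j - 1) by omega, Nat.choose_symm (by omega)]
      ring
  rw [h1, coeff_ser_mul, div_mul_cancel₀ _ (by exact_mod_cast Nat.factorial_ne_zero _),
    Finset.sum_range_succ, Finset.range_eq_Ico, ← Finset.sum_add_distrib,
    Finset.sum_eq_sum_Ico_succ_bot (Nat.succ_pos m)]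
  have h2 : ∀ j ∈ Finset.Ico 1 (m + 1), (Nat.choose m (j - 1) : ℝ) * (f (m + 1 - j) * g j)
      + (Nat.choose m j : ℝ) * (f (m + 1 - j) * g j)
      = (Nat.choose (m + 1) j : ℝ) * f (m + 1 - j) * g j := by
    intro j hj
    obtain ⟨i, rfl⟩ : ∃ i, j = i + 1 := ⟨j - 1, by rw [Finset.mem_Ico] at hj; omega⟩
    rw [Nat.choose_succ_succ, Nat.add_sub_cancel]
    push_cast
    ring
  rw [Finset.sum_congr rfl h2]
  simp

lemma ser_DWseq (γ : ℝ) (f g : ℕ → ℝ) : ser (DWseq γ f g)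
    = 1 + ((1 + alphaF γ) / 2) • ser f + ((1 - alphaF γ) / 2) • ser g := by
  ext m
  cases m with
  | zero => simp [ser, DWseq, DW]; ring
  | succ m => simp [ser, DWseq, PowerSeries.coeff_one]; ring

lemma ser_DZseq (γ : ℝ) (f g : ℕ → ℝ) : ser (DZseq γ f g)
    = 1 + ((1 - alphaF γ) / 2) • ser f + ((1 + alphaF γ) / 2) • ser g := by
  ext m
  cases m with
  | zero => simp [ser, DZseq, DZ]; ring
  | succ m => simp [ser, DZseq, PowerSeries.coeff_one]; ring

lemma ser_NWseq (γ r : ℝ) (f g : ℕ → ℝ) : ser (NWseq γ r f g)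
    = (-r) • ser f + (-(1 + 2 * alphaF γ) / 2) • (ser f * ser f)
      + (-(1 - alphaF γ) / 2) • (ser f * ser g) + (alphaF γ / 2) • (ser g * ser g) := by
  ext m
  cases m with
  | zero => simp [ser, NWseq, NW]; ring
  | succ m =>
    have hff := sum_choose_symm f f m
    have hfg := sum_choose_symm f g m
    have hgg := sum_choose_symm g g m
    have hS : ∑ j ∈ Finset.Ico 1 (m + 1), (Nat.choose m (j - 1) : ℝ)
          * hessNW γ (f (m + 1 - j)) (g (m + 1 - j)) (f j) (g j)
        = -(1 + 2 * alphaF γ)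
            * (∑ j ∈ Finset.Ico 1 (m + 1), (Nat.choose m (j - 1) : ℝ) * (f (m + 1 - j) * f j))
          - (1 - alphaF γ) / 2
            * ((∑ j ∈ Finset.Ico 1 (m + 1), (Nat.choose m (j - 1) : ℝ) * (f (m + 1 - j) * g j))
              + (∑ j ∈ Finset.Ico 1 (m + 1), (Nat.choose m (j - 1) : ℝ) * (g (m + 1 - j) * f j)))
          + alphaF γ
            * (∑ j ∈ Finset.Ico 1 (m + 1), (Nat.choose m (j - 1) : ℝ)
              * (g (m + 1 - j) * g j)) := by
      rw [← Finset.sum_add_distrib, Finset.mul_sum, Finset.mul_sum, Finset.mul_sum,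
        ← Finset.sum_sub_distrib, ← Finset.sum_add_distrib]
      refine Finset.sum_congr rfl fun j _ => ?_
      unfold hessNW
      ring
    simp only [ser, PowerSeries.coeff_mk, map_add, PowerSeries.coeff_smul] at hff hfg hgg ⊢
    have hm : ((m + 1).factorial : ℝ) ≠ 0 := by exact_mod_cast Nat.factorial_ne_zero _
    rw [div_eq_iff hm, NWseq, hS]
    simp only [smul_eq_mul, gradNW1, gradNW2]
    have hc : ∀ x : ℝ, x / ((m + 1).factorial : ℝ) * ((m + 1).factorial : ℝ) = x :=
      fun x => div_mul_cancel₀ x hm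
    linear_combination -(1 + 2 * alphaF γ) / 2 * hff - (1 - alphaF γ) / 2 * hfg
      + alphaF γ / 2 * hgg + r * hc (f (m + 1))

lemma ser_NZseq (γ r : ℝ) (f g : ℕ → ℝ) : ser (NZseq γ r f g)
    = (-r) • ser g + (-(1 + 2 * alphaF γ) / 2) • (ser g * ser g)
      + (-(1 - alphaF γ) / 2) • (ser f * ser g) + (alphaF γ / 2) • (ser f * ser f) := by
  -- `N_Z` is `N_W` with the two arguments exchanged.
  have h : NZseq γ r f g = NWseq γ r g f := by
    funext m
    cases m with
    | zero => simp only [NZseq, NWseq, NZ, NW]; ring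
    | succ m =>
      simp only [NZseq, NWseq, gradNZ1, gradNZ2, gradNW1, gradNW2]
      have : ∀ a b c d : ℝ, hessNZ γ a b c d = hessNW γ b a d c := fun a b c d => by
        unfold hessNZ hessNW; ring
      simp only [this]
      ring
  rw [h, ser_NWseq, mul_comm (ser g) (ser f)]

/-- A Leibniz identity for sequences is an identity between their generating series. -/
lemma ser_mul_of_leibniz {d f n : ℕ → ℝ}
    (h : ∀ m, ∑ j ∈ Finset.range (m + 1), (Nat.choose m j : ℝ) * d (m - j) * f (j + 1) = n m) :
    ser d * ser (fun i => f (i + 1)) = ser n := by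
  ext m
  rw [coeff_ser_mul, h m, ser, PowerSeries.coeff_mk]

/-! ### Catalan majorant -/

lemma catalan_pos (n : ℕ) : 0 < catalan n := by
  have h := succ_mul_catalan_eq_centralBinom n
  have h2 := Nat.centralBinom_pos n
  rw [← h] at h2
  exact Nat.pos_of_mul_pos_left h2

lemma catalan_succ_le (n : ℕ) : catalan (n + 1) ≤ 4 * catalan n := by
  have h1 := succ_mul_catalan_eq_centralBinom n
  have h2 := succ_mul_catalan_eq_centralBinom (n + 1)
  have h3 := Nat.succ_mul_centralBinom_succ n
  rw [← h1, ← h2] at h3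
  -- From the ratio `(n + 2) C_{n+1} = 2 (2n + 1) C_n` of consecutive Catalan numbers.
  have h4 : (n + 2) * catalan (n + 1) = 2 * (2 * n + 1) * catalan n := by
    have : 0 < n + 1 := Nat.succ_pos n
    apply Nat.eq_of_mul_eq_mul_left this
    linear_combination h3
  have h5 : (n + 2) * catalan (n + 1) ≤ (n + 2) * (4 * catalan n) := by
    rw [h4]; nlinarith [catalan_pos n]
  exact Nat.le_of_mul_le_mul_left h5 (by omega)

lemma catalan_le_pow (n : ℕ) : catalan n ≤ 4 ^ n := by
  induction n with
  | zero => simp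
  | succ n ih =>
    calc catalan (n + 1) ≤ 4 * catalan n := catalan_succ_le n
      _ ≤ 4 * 4 ^ n := by omega
      _ = 4 ^ (n + 1) := by ring

lemma catalan_le_succ (n : ℕ) : catalan n ≤ catalan (n + 1) := by
  rw [catalan_succ']
  refine le_trans (le_of_eq ?_) (Finset.single_le_sum (f := fun p : ℕ × ℕ =>
    catalan p.1 * catalan p.2) (fun _ _ => Nat.zero_le _)
    (show (0, n) ∈ Finset.HasAntidiagonal.antidiagonal n by simp))
  simp

/-- Any part of the Catalan convolution of order `N` is at most `catalan (N + 1)`. -/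
lemma sum_catalan_le {N : ℕ} {s : Finset ℕ} {f : ℕ → ℕ} (hf : Function.Injective f)
    (hs : ∀ j ∈ s, f j ≤ N) :
    ∑ j ∈ s, (catalan (N - f j) : ℝ) * (catalan (f j) : ℝ) ≤ (catalan (N + 1) : ℝ) := by
  rw [catalan_succ']
  push_cast
  refine le_trans (Finset.sum_map s
    ⟨fun j => (N - f j, f j), fun i j h => hf (Prod.ext_iff.1 h).2⟩
    (fun p : ℕ × ℕ => (catalan p.1 : ℝ) * (catalan p.2 : ℝ))).ge ?_
  refine Finset.sum_le_sum_of_subset_of_nonneg ?_ fun _ _ _ => by positivity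
  intro p hp
  obtain ⟨j, hj, rfl⟩ := Finset.mem_map.1 hp
  exact Finset.HasAntidiagonal.mem_antidiagonal.2 (Nat.sub_add_cancel (hs j hj))

/-- A convolution of two sequences dominated by `M C_i L^{2i-3}` (with truncated exponent). -/
lemma conv_le {c : ℕ → ℝ} {M L : ℝ} (hc : ∀ i, 0 ≤ c i) (hM : 0 ≤ M) (hL : 1 ≤ L) {m N : ℕ}
    (hN : N ≤ m + 3)
    (h : ∀ i < m + 2, c i ≤ M * catalan i * L ^ (2 * i - 3)) {s : Finset ℕ} {f : ℕ → ℕ}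
    (hf : Function.Injective f) (hs : ∀ j ∈ s, f j < m + 2 ∧ f j ≤ N ∧ N - f j < m + 2) :
    ∑ j ∈ s, c (N - f j) * c (f j) ≤ M ^ 2 * L ^ (2 * m) * catalan (N + 1) := by
  calc ∑ j ∈ s, c (N - f j) * c (f j)
      ≤ ∑ j ∈ s, M ^ 2 * L ^ (2 * m)
          * ((catalan (N - f j) : ℝ) * (catalan (f j) : ℝ)) := by
        refine Finset.sum_le_sum fun j hj => ?_
        obtain ⟨h1, h2, h3⟩ := hs j hj
        have hexp : (2 * (N - f j) - 3) + (2 * f j - 3) ≤ 2 * m := by omega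
        calc c (N - f j) * c (f j)
            ≤ (M * catalan (N - f j) * L ^ (2 * (N - f j) - 3))
              * (M * catalan (f j) * L ^ (2 * f j - 3)) :=
              mul_le_mul (h _ h3) (h _ h1) (hc _) (by positivity)
          _ = M ^ 2 * L ^ ((2 * (N - f j) - 3) + (2 * f j - 3))
              * ((catalan (N - f j) : ℝ) * (catalan (f j) : ℝ)) := by rw [pow_add]; ring
          _ ≤ _ := by gcongr
    _ = M ^ 2 * L ^ (2 * m) * ∑ j ∈ s, (catalan (N - f j) : ℝ) * (catalan (f j) : ℝ) := by
        rw [Finset.mul_sum]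
    _ ≤ _ := by
        gcongr
        exact sum_catalan_le hf fun j hj => (hs j hj).2.1

/-- The majorant argument. The convolution of order `m + 3` only involves indices between `2` and
`m + 1`; this is why the truncated exponent `2i - 3` gains a factor `L` there. -/
lemma majorant {c : ℕ → ℝ} {K M L : ℝ} (hc : ∀ i, 0 ≤ c i) (hM : 1 ≤ M) (hK : 0 ≤ K)
    (hL : 1 ≤ L) (hKL : 22 * K * M ≤ L) (h0 : c 0 ≤ M) (h1 : c 1 ≤ M)
    (hrec : ∀ m, c (m + 2) ≤ K * (c (m + 1)
      + ∑ j ∈ Finset.Ico 1 (m + 1), c (m + 1 - j) * c j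
      + ∑ j ∈ Finset.Ico 1 (m + 2), c (m + 2 - j) * c j
      + ∑ j ∈ Finset.Ico 1 (m + 1), c (m + 2 - j) * c (j + 1))) (i : ℕ) :
    c i ≤ M * catalan i * L ^ (2 * i - 3) := by
  induction i using Nat.strong_induction_on with
  | _ i ih =>
  match i with
  | 0 => simpa using h0
  | 1 => simpa using h1
  | m + 2 =>
    have hM0 : 0 ≤ M := by linarith
    have t1 := conv_le (N := m + 1) (f := id) (s := Finset.Ico 1 (m + 1)) hc hM0 hL (by omega) ih
      Function.injective_id (by intro j hj; rw [Finset.mem_Ico] at hj; simp only [id]; omega)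
    have t2 := conv_le (N := m + 2) (f := id) (s := Finset.Ico 1 (m + 2)) hc hM0 hL (by omega) ih
      Function.injective_id (by intro j hj; rw [Finset.mem_Ico] at hj; simp only [id]; omega)
    have t3 := conv_le (N := m + 3) (f := Nat.succ) (s := Finset.Ico 1 (m + 1)) hc hM0 hL
      (by omega) ih Nat.succ_injective
      (by intro j hj; rw [Finset.mem_Ico] at hj; simp only [Nat.succ_eq_add_one]; omega)
    simp only [id, Nat.succ_eq_add_one, Nat.reduceSubDiff] at t1 t2 t3
    have t0 : c (m + 1) ≤ M ^ 2 * L ^ (2 * m) * catalan (m + 2) := by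
      have e1 : (catalan (m + 1) : ℝ) ≤ catalan (m + 2) := by exact_mod_cast catalan_le_succ _
      have e2 : L ^ (2 * (m + 1) - 3) ≤ L ^ (2 * m) := pow_le_pow_right₀ hL (by omega)
      have e3 : M ≤ M ^ 2 := by nlinarith
      calc c (m + 1) ≤ M * catalan (m + 1) * L ^ (2 * (m + 1) - 3) := ih _ (by omega)
        _ ≤ M ^ 2 * catalan (m + 2) * L ^ (2 * m) := by gcongr
        _ = _ := by ring
    have k3 : (catalan (m + 3) : ℝ) ≤ 4 * catalan (m + 2) := by
      exact_mod_cast catalan_succ_le (m + 2)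
    have k4 : (catalan (m + 4) : ℝ) ≤ 4 * catalan (m + 3) := by
      exact_mod_cast catalan_succ_le (m + 3)
    have hP : 0 ≤ M ^ 2 * L ^ (2 * m) := by positivity
    have u2 := mul_le_mul_of_nonneg_left k3 hP
    have u3 := mul_le_mul_of_nonneg_left (k4.trans (by linarith : _ ≤ 16 * (catalan (m + 2) : ℝ)))
      hP
    -- The four terms contribute `1 + 1 + 4 + 16 = 22`, as `C_{n+1} ≤ 4 C_n`.
    calc c (m + 2) ≤ K * (22 * (M ^ 2 * L ^ (2 * m) * catalan (m + 2))) := by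
          refine (hrec m).trans (mul_le_mul_of_nonneg_left ?_ hK)
          linarith
      _ = (22 * K * M) * (M * L ^ (2 * m) * catalan (m + 2)) := by ring
      _ ≤ L * (M * L ^ (2 * m) * catalan (m + 2)) := by gcongr
      _ = M * catalan (m + 2) * L ^ (2 * (m + 2) - 3) := by
          rw [show 2 * (m + 2) - 3 = 2 * m + 1 by omega, pow_succ]; ring

/-! ### Uniform growth of the coefficients -/

/-- The size `(|W_i| + |Z_i|) / i!` of the normalised Taylor coefficients. -/
noncomputable def cSize (γ r : ℝ) (i : ℕ) : ℝ := (|Wc γ r i| + |Zc γ r i|) / (i.factorial : ℝ)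

lemma cSize_nonneg (γ r : ℝ) (i : ℕ) : 0 ≤ cSize γ r i := by
  unfold cSize; positivity

lemma cSize_mul (γ r : ℝ) (i : ℕ) :
    |Wc γ r i| + |Zc γ r i| = cSize γ r i * (i.factorial : ℝ) :=
  (div_mul_cancel₀ _ (by exact_mod_cast Nat.factorial_ne_zero i)).symm

lemma abs_lin_le {γ p q x y : ℝ} (hp : |p| ≤ γ) (hq : |q| ≤ γ) :
    |p * x + q * y| ≤ γ * (|x| + |y|) := by
  calc |p * x + q * y| ≤ |p| * |x| + |q| * |y| := by
        rw [← abs_mul, ← abs_mul]; exact abs_add_le _ _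
    _ ≤ γ * |x| + γ * |y| := by gcongr
    _ = _ := by ring

lemma abs_DWseq_le {γ : ℝ} (hγ : 1 < γ) (f g : ℕ → ℝ) {i : ℕ} (hi : i ≠ 0) :
    |DWseq γ f g i| ≤ γ * (|f i| + |g i|) := by
  obtain ⟨i, rfl⟩ := Nat.exists_eq_succ_of_ne_zero hi
  refine abs_lin_le ?_ ?_ <;> rw [abs_le, alphaF] <;> constructor <;> linarith

lemma abs_DZseq_le {γ : ℝ} (hγ : 1 < γ) (f g : ℕ → ℝ) {i : ℕ} (hi : i ≠ 0) :
    |DZseq γ f g i| ≤ γ * (|f i| + |g i|) := by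
  obtain ⟨i, rfl⟩ := Nat.exists_eq_succ_of_ne_zero hi
  refine abs_lin_le ?_ ?_ <;> rw [abs_le, alphaF] <;> constructor <;> linarith

lemma abs_hessNW_le {γ : ℝ} (hγ : 1 < γ) (a b c d : ℝ) :
    |hessNW γ a b c d| ≤ γ * ((|a| + |b|) * (|c| + |d|)) := by
  have e : hessNW γ a b c d = (-γ * (a * c) + (-(3 - γ) / 4) * (a * d))
      + ((-(3 - γ) / 4) * (b * c) + ((γ - 1) / 2) * (b * d)) := by
    unfold hessNW alphaF; ring
  have h1 : |-γ| ≤ γ := by rw [abs_le]; constructor <;> linarith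
  have h2 : |-(3 - γ) / 4| ≤ γ := by rw [abs_le]; constructor <;> linarith
  have h3 : |(γ - 1) / 2| ≤ γ := by rw [abs_le]; constructor <;> linarith
  have := abs_add_le (-γ * (a * c) + (-(3 - γ) / 4) * (a * d))
    ((-(3 - γ) / 4) * (b * c) + ((γ - 1) / 2) * (b * d))
  have k1 := abs_lin_le h1 h2 (x := a * c) (y := a * d)
  have k2 := abs_lin_le h2 h3 (x := b * c) (y := b * d)
  rw [abs_mul, abs_mul] at k1 k2
  rw [e]
  linarith

lemma abs_hessNZ_le {γ : ℝ} (hγ : 1 < γ) (a b c d : ℝ) :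
    |hessNZ γ a b c d| ≤ γ * ((|a| + |b|) * (|c| + |d|)) := by
  have : hessNZ γ a b c d = hessNW γ b a d c := by unfold hessNZ hessNW; ring
  rw [this, add_comm |a|, add_comm |c|]
  exact abs_hessNW_le hγ b a d c

/-- Binomially weighted sums of total order `N + 1` in the unnormalised coefficients become, after
division by `(N+1)!`, unweighted convolutions of the sizes. -/
lemma abs_sum_le {γ r : ℝ} (hγ : 0 ≤ γ) {N : ℕ} {s : Finset ℕ} {q : ℕ → ℕ} {F : ℕ → ℝ}
    (hq : ∀ j ∈ s, q j ≤ N)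
    (hF : ∀ j ∈ s, |F j| ≤ γ * ((|Wc γ r (N - q j)| + |Zc γ r (N - q j)|)
      * (|Wc γ r (q j + 1)| + |Zc γ r (q j + 1)|))) :
    |∑ j ∈ s, (Nat.choose N (q j) : ℝ) * F j|
      ≤ ((N + 1).factorial : ℝ) * (γ * ∑ j ∈ s, cSize γ r (N - q j) * cSize γ r (q j + 1)) := by
  refine (Finset.abs_sum_le_sum_abs _ _).trans ?_
  rw [Finset.mul_sum, Finset.mul_sum]
  refine Finset.sum_le_sum fun j hj => ?_
  have hfac : Nat.choose N (q j) * (N - q j).factorial * (q j + 1).factorial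
      ≤ (N + 1).factorial := by
    have h := Nat.choose_mul_factorial_mul_factorial (hq j hj)
    calc Nat.choose N (q j) * (N - q j).factorial * (q j + 1).factorial
        = (q j + 1) * (Nat.choose N (q j) * (q j).factorial * (N - q j).factorial) := by
          rw [Nat.factorial_succ]; ring
      _ ≤ (N + 1) * N.factorial := by
          rw [h]; exact Nat.mul_le_mul_right _ (Nat.succ_le_succ (hq j hj))
      _ = _ := (Nat.factorial_succ N).symm
  have hfac' : (Nat.choose N (q j) : ℝ) * ((N - q j).factorial : ℝ) * ((q j + 1).factorial : ℝ)
      ≤ ((N + 1).factorial : ℝ) := by exact_mod_cast hfac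
  have hF' := hF j hj
  rw [cSize_mul, cSize_mul] at hF'
  rw [abs_mul, Nat.abs_cast]
  have hp : 0 ≤ γ * (cSize γ r (N - q j) * cSize γ r (q j + 1)) :=
    mul_nonneg hγ (mul_nonneg (cSize_nonneg _ _ _) (cSize_nonneg _ _ _))
  calc (Nat.choose N (q j) : ℝ) * |F j| ≤ (Nat.choose N (q j) : ℝ) * _ :=
        mul_le_mul_of_nonneg_left hF' (Nat.cast_nonneg _)
    _ = ((Nat.choose N (q j) : ℝ) * ((N - q j).factorial : ℝ) * ((q j + 1).factorial : ℝ))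
        * (γ * (cSize γ r (N - q j) * cSize γ r (q j + 1))) := by ring
    _ ≤ _ := mul_le_mul_of_nonneg_right hfac' hp

/-- The recursion in terms of sizes. The term of order `m + 3` in the equation for `Z_{m+2}` carries
a factor of order `m`, which is absorbed by `m + 2 - k(r)`. -/
lemma cSize_rec {γ r B : ℝ} (hγ : 1 < γ) (hB : 1 ≤ B)
    (hDB : |(DW γ (W₀ γ r) (Z₀ γ r))⁻¹| ≤ B)
    (hEB : |((1 - alphaF γ) / 2 * W₁ γ r + (1 + alphaF γ) / 2 * Z₁ γ r)⁻¹| ≤ B)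
    (hg1 : |gradNW1 γ r (W₀ γ r) (Z₀ γ r)| ≤ B) (hg2 : |gradNW2 γ (W₀ γ r) (Z₀ γ r)| ≤ B)
    (hg3 : |gradNZ1 γ (W₀ γ r) (Z₀ γ r)| ≤ B) (hZ : |Z₁ γ r| ≤ B)
    (hk : ∀ m : ℕ, ((m : ℝ) + 3) * |((m : ℝ) + 2 - kFun γ r)⁻¹| ≤ B) (m : ℕ) :
    cSize γ r (m + 2) ≤ (B * (B + γ) + B ^ 2 * (2 * γ + B ^ 2 * (1 + γ) * (B + γ)))
      * (cSize γ r (m + 1)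
      + ∑ j ∈ Finset.Ico 1 (m + 1), cSize γ r (m + 1 - j) * cSize γ r j
      + ∑ j ∈ Finset.Ico 1 (m + 2), cSize γ r (m + 2 - j) * cSize γ r j
      + ∑ j ∈ Finset.Ico 1 (m + 1), cSize γ r (m + 2 - j) * cSize γ r (j + 1)) := by
  have hγ0 : 0 ≤ γ := by linarith
  have hB0 : 0 ≤ B := by linarith
  set T1 := ∑ j ∈ Finset.Ico 1 (m + 1), cSize γ r (m + 1 - j) * cSize γ r j with hT1
  set T2 := ∑ j ∈ Finset.Ico 1 (m + 2), cSize γ r (m + 2 - j) * cSize γ r j with hT2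
  set T3 := ∑ j ∈ Finset.Ico 1 (m + 1), cSize γ r (m + 2 - j) * cSize γ r (j + 1) with hT3
  have hnn : ∀ i j, 0 ≤ cSize γ r i * cSize γ r j :=
    fun i j => mul_nonneg (cSize_nonneg _ _ _) (cSize_nonneg _ _ _)
  have p0 : 0 ≤ cSize γ r (m + 1) := cSize_nonneg _ _ _
  have p1 : 0 ≤ T1 := Finset.sum_nonneg fun _ _ => hnn _ _
  have p2 : 0 ≤ T2 := Finset.sum_nonneg fun _ _ => hnn _ _
  have p3 : 0 ≤ T3 := Finset.sum_nonneg fun _ _ => hnn _ _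
  set Q := cSize γ r (m + 1) + T1 + T2 + T3 with hQ
  have hf1 : (0 : ℝ) < ((m + 1).factorial : ℝ) := by exact_mod_cast Nat.factorial_pos _
  have hf2 : (0 : ℝ) < ((m + 2).factorial : ℝ) := by exact_mod_cast Nat.factorial_pos _
  have hf12 : ((m + 1).factorial : ℝ) ≤ ((m + 2).factorial : ℝ) := by
    exact_mod_cast Nat.factorial_le (by omega)
  have hf3 : ((m + 3).factorial : ℝ) = ((m : ℝ) + 3) * ((m + 2).factorial : ℝ) := by
    rw [Nat.factorial_succ (m + 2)]; push_cast; ring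
  -- The two Hessian sums, of orders `m + 1` and `m + 2`.
  have s1 : |∑ j ∈ Finset.Ico 1 (m + 1), (Nat.choose m (j - 1) : ℝ)
      * hessNW γ (Wc γ r (m + 1 - j)) (Zc γ r (m + 1 - j)) (Wc γ r j) (Zc γ r j)|
      ≤ ((m + 1).factorial : ℝ) * (γ * T1) := by
    have e : ∀ j ∈ Finset.Ico 1 (m + 1), m - (j - 1) = m + 1 - j ∧ j - 1 + 1 = j :=
      fun j hj => by rw [Finset.mem_Ico] at hj; omega
    refine (abs_sum_le (r := r) hγ0 (q := fun j => j - 1) (fun j hj => ?_)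
      fun j hj => ?_).trans (le_of_eq ?_)
    · rw [Finset.mem_Ico] at hj; omega
    · simp only [(e j hj).1, (e j hj).2]; exact abs_hessNW_le hγ _ _ _ _
    · rw [hT1]
      congr 2
      exact Finset.sum_congr rfl fun j hj => by rw [(e j hj).1, (e j hj).2]
  have s2 : |∑ j ∈ Finset.Ico 1 (m + 2), (Nat.choose (m + 1) (j - 1) : ℝ)
      * hessNZ γ (Wc γ r (m + 2 - j)) (Zc γ r (m + 2 - j)) (Wc γ r j) (Zc γ r j)|
      ≤ ((m + 2).factorial : ℝ) * (γ * T2) := by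
    have e : ∀ j ∈ Finset.Ico 1 (m + 2), m + 1 - (j - 1) = m + 2 - j ∧ j - 1 + 1 = j :=
      fun j hj => by rw [Finset.mem_Ico] at hj; omega
    refine (abs_sum_le (r := r) hγ0 (q := fun j => j - 1) (fun j hj => ?_)
      fun j hj => ?_).trans (le_of_eq ?_)
    · rw [Finset.mem_Ico] at hj; omega
    · simp only [(e j hj).1, (e j hj).2]; exact abs_hessNZ_le hγ _ _ _ _
    · rw [hT2]
      congr 2
      exact Finset.sum_congr rfl fun j hj => by rw [(e j hj).1, (e j hj).2]
  -- The two Leibniz sums, of orders `m + 2` and `m + 3`.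
  have s3 : |∑ j ∈ Finset.range (m + 1), (Nat.choose (m + 1) j : ℝ)
      * DWseq γ (Wc γ r) (Zc γ r) (m + 1 - j) * Wc γ r (j + 1)|
      ≤ ((m + 2).factorial : ℝ) * (γ * T2) := by
    simp only [mul_assoc]
    refine (abs_sum_le (r := r) hγ0 (q := id) (fun j hj => ?_)
      fun j hj => ?_).trans (le_of_eq ?_)
    · rw [Finset.mem_range] at hj; simp only [id]; omega
    · rw [Finset.mem_range] at hj
      rw [abs_mul, ← mul_assoc]
      exact mul_le_mul (abs_DWseq_le hγ _ _ (by omega))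
        (le_add_of_nonneg_right (abs_nonneg _)) (abs_nonneg _) (by positivity)
    · rw [hT2, Finset.sum_Ico_eq_sum_range]
      congr 2
      refine Finset.sum_congr rfl fun j _ => ?_
      rw [show m + 2 - (1 + j) = m + 1 - id j by simp only [id]; omega, add_comm 1 j]
      rfl
  have s4 : |∑ j ∈ Finset.Ico 1 (m + 1), (Nat.choose (m + 2) j : ℝ)
      * DZseq γ (Wc γ r) (Zc γ r) (m + 2 - j) * Zc γ r (j + 1)|
      ≤ ((m + 3).factorial : ℝ) * (γ * T3) := by
    simp only [mul_assoc]
    refine (abs_sum_le (r := r) hγ0 (q := id) (fun j hj => ?_)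
      fun j hj => ?_).trans (le_of_eq ?_)
    · rw [Finset.mem_Ico] at hj; simp only [id]; omega
    · rw [Finset.mem_Ico] at hj
      rw [abs_mul, ← mul_assoc]
      exact mul_le_mul (abs_DZseq_le hγ _ _ (by omega))
        (le_add_of_nonneg_left (abs_nonneg _)) (abs_nonneg _) (by positivity)
    · rfl
  have e0 : Wc γ r 0 = W₀ γ r ∧ Zc γ r 0 = Z₀ γ r := by simp [Wc, Zc, coeff]
  have n1 : |NWseq γ r (Wc γ r) (Zc γ r) (m + 1)|
      ≤ ((m + 1).factorial : ℝ) * (B * cSize γ r (m + 1) + γ * T1) := by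
    rw [NWseq, e0.1, e0.2]
    refine (abs_add_le _ _).trans ?_
    have := abs_lin_le hg1 hg2 (x := Wc γ r (m + 1)) (y := Zc γ r (m + 1))
    rw [cSize_mul] at this
    linarith
  have hw : |Wc γ r (m + 2)| ≤ ((m + 2).factorial : ℝ) * (B * (B + γ) * Q) := by
    rw [Wc_rec, div_eq_mul_inv, abs_mul]
    have hnum : |NWseq γ r (Wc γ r) (Zc γ r) (m + 1)
        - ∑ j ∈ Finset.range (m + 1), (Nat.choose (m + 1) j : ℝ)
          * DWseq γ (Wc γ r) (Zc γ r) (m + 1 - j) * Wc γ r (j + 1)|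
        ≤ ((m + 2).factorial : ℝ) * ((B + γ) * Q) := by
      calc _ ≤ _ := abs_sub _ _
        _ ≤ ((m + 2).factorial : ℝ) * (B * cSize γ r (m + 1) + γ * T1)
            + ((m + 2).factorial : ℝ) * (γ * T2) :=
          add_le_add (n1.trans (mul_le_mul_of_nonneg_right hf12 (by positivity))) s3
        _ = ((m + 2).factorial : ℝ) * (B * cSize γ r (m + 1) + γ * T1 + γ * T2) := by ring
        _ ≤ _ := by
          refine mul_le_mul_of_nonneg_left ?_ hf2.le
          rw [hQ]
          nlinarith [mul_nonneg hγ0 p0, mul_nonneg hγ0 p3, mul_nonneg hB0 p1,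
            mul_nonneg hB0 p2, mul_nonneg hB0 p3]
    calc _ ≤ ((m + 2).factorial : ℝ) * ((B + γ) * Q) * B :=
          mul_le_mul hnum hDB (abs_nonneg _) (by positivity)
      _ = _ := by ring
  have hz : |Zc γ r (m + 2)| ≤ ((m + 2).factorial : ℝ)
      * (B ^ 2 * (2 * γ + B ^ 2 * (1 + γ) * (B + γ)) * Q) := by
    rw [Zc_rec, div_eq_mul_inv, mul_inv, abs_mul, abs_mul]
    set w := Wc γ r (m + 2)
    set S2 := ∑ j ∈ Finset.Ico 1 (m + 2), (Nat.choose (m + 1) (j - 1) : ℝ)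
      * hessNZ γ (Wc γ r (m + 2 - j)) (Zc γ r (m + 2 - j)) (Wc γ r j) (Zc γ r j)
    set S4 := ∑ j ∈ Finset.Ico 1 (m + 1), (Nat.choose (m + 2) j : ℝ)
      * DZseq γ (Wc γ r) (Zc γ r) (m + 2 - j) * Zc γ r (j + 1)
    have a1 : |gradNZ1 γ (W₀ γ r) (Z₀ γ r) * w| ≤ B * |w| := by
      rw [abs_mul]; gcongr
    have a2 : |Z₁ γ r * w * ((1 - alphaF γ) / 2)| ≤ B * |w| * γ := by
      rw [abs_mul, abs_mul]
      gcongr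
      rw [abs_le, alphaF]; constructor <;> linarith
    have hf3' : ((m + 2).factorial : ℝ) ≤ ((m + 3).factorial : ℝ) := by
      exact_mod_cast Nat.factorial_le (by omega)
    have hnum : |-S4 + (gradNZ1 γ (W₀ γ r) (Z₀ γ r) * w + S2)
        - Z₁ γ r * w * ((1 - alphaF γ) / 2)|
        ≤ ((m + 3).factorial : ℝ) * ((2 * γ + B ^ 2 * (1 + γ) * (B + γ)) * Q) := by
      have b1 := abs_sub (-S4 + (gradNZ1 γ (W₀ γ r) (Z₀ γ r) * w + S2))
        (Z₁ γ r * w * ((1 - alphaF γ) / 2))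
      have b2 := abs_add_le (-S4) (gradNZ1 γ (W₀ γ r) (Z₀ γ r) * w + S2)
      have b3 := abs_add_le (gradNZ1 γ (W₀ γ r) (Z₀ γ r) * w) S2
      rw [abs_neg] at b2
      have b4 : B * |w| + B * |w| * γ
          ≤ ((m + 3).factorial : ℝ) * (B ^ 2 * (1 + γ) * (B + γ) * Q) := by
        calc B * |w| + B * |w| * γ = B * (1 + γ) * |w| := by ring
          _ ≤ B * (1 + γ) * (((m + 3).factorial : ℝ) * (B * (B + γ) * Q)) := by
            gcongr
            exact hw.trans (mul_le_mul_of_nonneg_right hf3' (by positivity))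
          _ = _ := by ring
      have b5 : ((m + 2).factorial : ℝ) * (γ * T2) ≤ ((m + 3).factorial : ℝ) * (γ * Q) := by
        gcongr; linarith
      have b6 : ((m + 3).factorial : ℝ) * (γ * T3) ≤ ((m + 3).factorial : ℝ) * (γ * Q) := by
        gcongr; linarith
      linarith
    calc _ ≤ ((m + 3).factorial : ℝ) * ((2 * γ + B ^ 2 * (1 + γ) * (B + γ)) * Q)
          * (B * |((m : ℝ) + 2 - kFun γ r)⁻¹|) := by
          refine mul_le_mul hnum (mul_le_mul_of_nonneg_right hEB (abs_nonneg _))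
            (by positivity) (by positivity)
      _ = ((m + 2).factorial : ℝ) * ((2 * γ + B ^ 2 * (1 + γ) * (B + γ)) * Q) * B
          * (((m : ℝ) + 3) * |((m : ℝ) + 2 - kFun γ r)⁻¹|) := by rw [hf3]; ring
      _ ≤ ((m + 2).factorial : ℝ) * ((2 * γ + B ^ 2 * (1 + γ) * (B + γ)) * Q) * B * B := by
          gcongr
          exact hk m
      _ = _ := by ring
  rw [cSize, div_le_iff₀ hf2]
  linarith

/-! ### Uniformity in the parameter -/

lemma continuous_R1 (γ : ℝ) : Continuous (R1 γ) := by
  unfold R1; fun_prop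

lemma continuous_R2 (γ : ℝ) : Continuous (R2 γ) := by
  have := continuous_R1 γ
  unfold R2; fun_prop

lemma continuous_W₀ (γ : ℝ) : Continuous (W₀ γ) := by
  have := continuous_R1 γ
  unfold W₀; fun_prop

lemma continuous_Z₀ (γ : ℝ) : Continuous (Z₀ γ) := by
  have := continuous_R1 γ
  unfold Z₀; fun_prop

lemma continuous_W₁ (γ : ℝ) : Continuous (W₁ γ) := by
  have := continuous_R1 γ
  unfold W₁; fun_prop

lemma continuous_Z₁ (γ : ℝ) : Continuous (Z₁ γ) := by
  have := continuous_R1 γ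
  have := continuous_R2 γ
  unfold Z₁; fun_prop

/-- The set `s` of parameters is admissible: `1 < r < r*(γ)` and `n < k(r) < n + 1` on `s`. -/
def Admissible (γ : ℝ) (n : ℕ) (s : Set ℝ) : Prop :=
  s ⊆ {r : ℝ | 1 < r ∧ r < rStar γ ∧ (n : ℝ) < kFun γ r ∧ kFun γ r < (n : ℝ) + 1}

section Uniform

variable {γ : ℝ} {n : ℕ} {s : Set ℝ}

lemma Admissible.DW_ne (hI : Admissible γ n s) (hγ : 1 < γ) {r : ℝ} (hr : r ∈ s) :
    DW γ (W₀ γ r) (Z₀ γ r) ≠ 0 :=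
  (DW_sonic_pos hγ (hI hr).1 (hI hr).2.1).ne'

lemma Admissible.DZ1_ne (hI : Admissible γ n s) (hγ : 1 < γ) {r : ℝ} (hr : r ∈ s) :
    (1 - alphaF γ) / 2 * W₁ γ r + (1 + alphaF γ) / 2 * Z₁ γ r ≠ 0 := by
  have h := (den_ne_zero_and_R2_ne_zero (hI hr).2.2.1 (hI hr).2.2.2).1
  rw [DZ1_eq r hγ]
  exact div_ne_zero (neg_ne_zero.2 h) (by norm_num)

lemma Admissible.DZ1_mul_kFun (hI : Admissible γ n s) (hγ : 1 < γ) {r : ℝ} (hr : r ∈ s) :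
    ((1 - alphaF γ) / 2 * W₁ γ r + (1 + alphaF γ) / 2 * Z₁ γ r) * kFun γ r
      = gradNZ2 γ r (W₀ γ r) (Z₀ γ r) - (1 + alphaF γ) / 2 * Z₁ γ r := by
  have h := (den_ne_zero_and_R2_ne_zero (hI hr).2.2.1 (hI hr).2.2.2).1
  rw [DZ1_eq r hγ, gradNZ2_sub_eq r hγ, kFun]
  field_simp

lemma Admissible.sub_kFun_ne (hI : Admissible γ n s) {r : ℝ} (hr : r ∈ s) (m : ℕ) :
    (m : ℝ) + 2 - kFun γ r ≠ 0 := by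
  intro h
  have h1 : (n : ℝ) < (m + 2 : ℕ) := by push_cast; linarith [(hI hr).2.2.1]
  have h2 : ((m + 2 : ℕ) : ℝ) < (n + 1 : ℕ) := by push_cast; linarith [(hI hr).2.2.2]
  have h1' : n < m + 2 := by exact_mod_cast h1
  have h2' : m + 2 < n + 1 := by exact_mod_cast h2
  omega

lemma Admissible.continuousOn_kFun (hI : Admissible γ n s) : ContinuousOn (kFun γ) s := by
  have := continuous_R2 γ
  refine ContinuousOn.div (by fun_prop) (by fun_prop) fun r hr => ?_
  exact (den_ne_zero_and_R2_ne_zero (hI hr).2.2.1 (hI hr).2.2.2).1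

lemma continuous_DW (γ : ℝ) : Continuous fun r => DW γ (W₀ γ r) (Z₀ γ r) := by
  have := continuous_W₀ γ
  have := continuous_Z₀ γ
  unfold DW; fun_prop

lemma continuous_DZ1 (γ : ℝ) :
    Continuous fun r => (1 - alphaF γ) / 2 * W₁ γ r + (1 + alphaF γ) / 2 * Z₁ γ r := by
  have := continuous_W₁ γ
  have := continuous_Z₁ γ
  fun_prop

lemma continuous_gradNZ1 (γ : ℝ) : Continuous fun r => gradNZ1 γ (W₀ γ r) (Z₀ γ r) := by
  have := continuous_W₀ γ
  have := continuous_Z₀ γ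
  unfold gradNZ1; fun_prop

/-- Every Taylor coefficient is a continuous function of `r`. -/
lemma Admissible.continuousOn_coeff (hI : Admissible γ n s) (hγ : 1 < γ) (i : ℕ) :
    ContinuousOn (fun r => Wc γ r i) s ∧ ContinuousOn (fun r => Zc γ r i) s := by
  induction i using Nat.strong_induction_on with
  | _ i ih =>
  match i with
  | 0 =>
    simp only [Wc, Zc, coeff]
    exact ⟨(continuous_W₀ γ).continuousOn, (continuous_Z₀ γ).continuousOn⟩
  | 1 =>
    simp only [Wc, Zc, coeff]
    exact ⟨(continuous_W₁ γ).continuousOn, (continuous_Z₁ γ).continuousOn⟩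
  | m + 2 =>
    have hW : ∀ j, j < m + 2 → ContinuousOn (fun r => Wc γ r j) s := fun j h => (ih j h).1
    have hZ : ∀ j, j < m + 2 → ContinuousOn (fun r => Zc γ r j) s := fun j h => (ih j h).2
    have hW0 := (continuous_W₀ γ).continuousOn (s := s)
    have hZ0 := (continuous_Z₀ γ).continuousOn (s := s)
    have hW' : ContinuousOn (fun r => Wc γ r (m + 2)) s := by
      simp only [Wc_rec]
      refine ContinuousOn.div (ContinuousOn.sub ?_ ?_) (continuous_DW γ).continuousOn
        fun r hr => hI.DW_ne hγ hr
      · simp only [NWseq]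
        refine ContinuousOn.add (ContinuousOn.add (ContinuousOn.mul ?_ (hW _ (by omega)))
          (ContinuousOn.mul ?_ (hZ _ (by omega)))) (continuousOn_finsetSum _ fun j hj => ?_)
        · have := hW 0 (by omega)
          have := hZ 0 (by omega)
          unfold gradNW1; fun_prop
        · have := hW 0 (by omega)
          have := hZ 0 (by omega)
          unfold gradNW2; fun_prop
        · have hj := Finset.mem_Ico.1 hj
          have := hW j (by omega)
          have := hZ j (by omega)
          have := hW (m + 1 - j) (by omega)
          have := hZ (m + 1 - j) (by omega)
          unfold hessNW; fun_prop
      · refine continuousOn_finsetSum _ fun j hj => ?_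
        have hj := Finset.mem_range.1 hj
        obtain ⟨l, hl⟩ : ∃ l, m + 1 - j = l + 1 := ⟨m - j, by omega⟩
        have := hW (j + 1) (by omega)
        have := hW (l + 1) (by omega)
        have := hZ (l + 1) (by omega)
        simp only [hl, DWseq]
        fun_prop
    refine ⟨hW', ?_⟩
    simp only [Zc_rec]
    refine ContinuousOn.div (ContinuousOn.sub (ContinuousOn.add (ContinuousOn.neg ?_)
      (ContinuousOn.add ?_ ?_)) ?_) ?_ ?_
    · refine continuousOn_finsetSum _ fun j hj => ?_
      have hj := Finset.mem_Ico.1 hj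
      obtain ⟨l, hl⟩ : ∃ l, m + 2 - j = l + 1 := ⟨m + 1 - j, by omega⟩
      have := hZ (j + 1) (by omega)
      have := hW (l + 1) (by omega)
      have := hZ (l + 1) (by omega)
      simp only [hl, DZseq]
      fun_prop
    · exact (continuous_gradNZ1 γ).continuousOn.mul hW'
    · refine continuousOn_finsetSum _ fun j hj => ?_
      have hj := Finset.mem_Ico.1 hj
      have := hW j (by omega)
      have := hZ j (by omega)
      have := hW (m + 2 - j) (by omega)
      have := hZ (m + 2 - j) (by omega)
      unfold hessNZ; fun_prop
    · exact ((continuous_Z₁ γ).continuousOn.mul hW').mul continuousOn_const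
    · exact (continuous_DZ1 γ).continuousOn.mul (continuousOn_const.sub hI.continuousOn_kFun)
    · exact fun r hr => mul_ne_zero (hI.DZ1_ne hγ hr) (hI.sub_kFun_ne hr m)

/-- The small divisors `m - k(r)` grow linearly, uniformly in `r`. -/
lemma mul_inv_sub_le {n m : ℕ} {k A : ℝ} (hA : 1 ≤ A) (h1 : (n : ℝ) < k) (h2 : k < n + 1)
    (hA1 : |(k - n)⁻¹| ≤ A) (hA2 : |((n : ℝ) + 1 - k)⁻¹| ≤ A) :
    ((m : ℝ) + 3) * |((m : ℝ) + 2 - k)⁻¹| ≤ (n + 3) * A := by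
  rw [abs_inv, abs_of_pos (by linarith), inv_le_comm₀ (by linarith) (by linarith)] at hA1 hA2
  have hA0 : 0 < A := by linarith
  have hn : (0 : ℝ) ≤ n := n.cast_nonneg
  have hm : (0 : ℝ) ≤ m := m.cast_nonneg
  have hAi : 0 < A⁻¹ := inv_pos.2 hA0
  have hAA : A * A⁻¹ = 1 := mul_inv_cancel₀ hA0.ne'
  have hAi1 : A⁻¹ ≤ 1 := inv_le_one_of_one_le₀ hA
  rw [abs_inv]
  by_cases h : m + 2 ≤ n
  · have h' : (m : ℝ) + 2 ≤ n := by exact_mod_cast h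
    have h3 : A⁻¹ ≤ |(m : ℝ) + 2 - k| := by
      rw [abs_of_neg (by linarith)]; linarith
    rw [← div_eq_mul_inv, div_le_iff₀ (by linarith)]
    nlinarith [mul_le_mul_of_nonneg_left h3 (by positivity : 0 ≤ ((n : ℝ) + 3) * A)]
  · have h' : (n : ℝ) ≤ m + 1 := by exact_mod_cast (by omega : n ≤ m + 1)
    have h3 : (m : ℝ) + 1 - n + A⁻¹ ≤ |(m : ℝ) + 2 - k| := by
      rw [abs_of_pos (by linarith)]; linarith
    rw [← div_eq_mul_inv, div_le_iff₀ (by linarith)]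
    have h4 := mul_le_mul_of_nonneg_left h3 (by positivity : 0 ≤ ((n : ℝ) + 3) * A)
    have h5 : (m : ℝ) + 1 - n ≤ A * ((m : ℝ) + 1 - n) := by nlinarith
    have h6 : ((n : ℝ) + 3) * (A * ((m : ℝ) + 1 - n)) ≥ 3 * ((m : ℝ) + 1 - n) := by
      nlinarith
    nlinarith

/-- The uniform factorial bound on the Taylor coefficients. -/
lemma Admissible.exists_bound (hI : Admissible γ n s) (hγ : 1 < γ) (hs : IsCompact s) :
    ∃ C : ℝ, 0 < C ∧ ∀ r ∈ s, ∀ i : ℕ,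
      |Wc γ r i| + |Zc γ r i| ≤ C ^ (i + 1) * (i.factorial : ℝ) := by
  have hb : ∀ f : ℝ → ℝ, ContinuousOn f s → ∃ B, ∀ r ∈ s, |f r| ≤ B :=
    fun f hf => by simpa using hs.exists_bound_of_continuousOn hf
  have cW := (continuous_W₀ γ)
  have cZ := (continuous_Z₀ γ)
  obtain ⟨B1, hB1⟩ := hb _ ((continuous_DW γ).continuousOn.inv₀ fun r hr => hI.DW_ne hγ hr)
  obtain ⟨B2, hB2⟩ := hb _ ((continuous_DZ1 γ).continuousOn.inv₀ fun r hr => hI.DZ1_ne hγ hr)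
  obtain ⟨B3, hB3⟩ := hb (fun r => gradNW1 γ r (W₀ γ r) (Z₀ γ r)) (by unfold gradNW1; fun_prop)
  obtain ⟨B4, hB4⟩ := hb (fun r => gradNW2 γ (W₀ γ r) (Z₀ γ r)) (by unfold gradNW2; fun_prop)
  obtain ⟨B5, hB5⟩ := hb (fun r => gradNZ1 γ (W₀ γ r) (Z₀ γ r)) (by unfold gradNZ1; fun_prop)
  obtain ⟨B6, hB6⟩ := hb _ (continuous_Z₁ γ).continuousOn
  obtain ⟨A1, hA1⟩ := hb _ ((hI.continuousOn_kFun.sub continuousOn_const).inv₀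
    fun r hr => (sub_pos.2 (hI hr).2.2.1).ne')
  obtain ⟨A2, hA2⟩ := hb _ ((continuousOn_const.sub hI.continuousOn_kFun).inv₀
    fun r hr => (sub_pos.2 (hI hr).2.2.2).ne')
  have hc : ∀ i, ContinuousOn (fun r => cSize γ r i) s := fun i => by
    have := (hI.continuousOn_coeff hγ i).1
    have := (hI.continuousOn_coeff hγ i).2
    unfold cSize; fun_prop
  obtain ⟨M0, hM0⟩ := hb _ (hc 0)
  obtain ⟨M1, hM1⟩ := hb _ (hc 1)
  set A := max 1 (max A1 A2) with hA
  set B := max (((n : ℝ) + 3) * A) (max B1 (max B2 (max B3 (max B4 (max B5 B6))))) with hB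
  set M := max 1 (max M0 M1) with hM
  have hA' : 1 ≤ A := le_max_left _ _
  have hn : (0 : ℝ) ≤ n := n.cast_nonneg
  have hB' : 1 ≤ B := le_trans (by nlinarith) (le_max_left _ _)
  have hM' : 1 ≤ M := le_max_left _ _
  set K := B * (B + γ) + B ^ 2 * (2 * γ + B ^ 2 * (1 + γ) * (B + γ)) with hK
  have hK' : 0 ≤ K := by positivity
  set L := max 1 (22 * K * M) with hL
  have hL' : 1 ≤ L := le_max_left _ _
  refine ⟨4 * M * L ^ 2, by positivity, fun r hr i => ?_⟩
  have key := majorant (cSize_nonneg γ r) hM' hK' hL' (le_max_right _ _)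
    ((le_abs_self _).trans ((hM0 r hr).trans (by simp [hM])))
    ((le_abs_self _).trans ((hM1 r hr).trans (by simp [hM])))
    (cSize_rec hγ hB' ((hB1 r hr).trans (by simp [hB])) ((hB2 r hr).trans (by simp [hB]))
      ((hB3 r hr).trans (by simp [hB])) ((hB4 r hr).trans (by simp [hB]))
      ((hB5 r hr).trans (by simp [hB])) ((hB6 r hr).trans (by simp [hB]))
      fun m => (mul_inv_sub_le hA' (hI hr).2.2.1 (hI hr).2.2.2 ((hA1 r hr).trans (by simp [hA]))
        ((hA2 r hr).trans (by simp [hA]))).trans (le_max_left _ _)) i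
  have hf : (0 : ℝ) < (i.factorial : ℝ) := by exact_mod_cast Nat.factorial_pos _
  rw [← div_le_iff₀ hf]
  have hcat : (catalan i : ℝ) ≤ 4 ^ i := by exact_mod_cast catalan_le_pow i
  calc (|Wc γ r i| + |Zc γ r i|) / (i.factorial : ℝ) = cSize γ r i := rfl
    _ ≤ M * catalan i * L ^ (2 * i - 3) := key
    _ ≤ M ^ (i + 1) * 4 ^ (i + 1) * L ^ (2 * (i + 1)) := by
        gcongr
        · exact le_self_pow₀ hM' (by omega)
        · exact hcat.trans (pow_le_pow_right₀ (by norm_num) (by omega))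
        · omega
    _ = (4 * M * L ^ 2) ^ (i + 1) := by rw [mul_pow, mul_pow, ← pow_mul]; ring

end Uniform

/-! ### Convergent power series -/

open PowerSeries in
/-- The power series `A` converges absolutely at `ξ`, with sum `v`. -/
def EvalsTo (ξ : ℝ) (A : ℝ⟦X⟧) (v : ℝ) : Prop :=
  Summable (fun i => ‖PowerSeries.coeff i A * ξ ^ i‖) ∧
    HasSum (fun i => PowerSeries.coeff i A * ξ ^ i) v

section EvalsTo

open PowerSeries

variable {ξ u v : ℝ} {A B : ℝ⟦X⟧}

lemma EvalsTo.unique (hA : EvalsTo ξ A u) (hB : EvalsTo ξ A v) : u = v := hA.2.unique hB.2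

lemma EvalsTo.one : EvalsTo ξ 1 1 := by
  have h : ∀ i, i ≠ 0 → PowerSeries.coeff i (1 : ℝ⟦X⟧) * ξ ^ i = 0 := fun i hi => by
    simp [PowerSeries.coeff_one, hi]
  refine ⟨summable_of_ne_finset_zero (s := {0}) fun i hi => ?_, ?_⟩
  · rw [h i (by simpa using hi), norm_zero]
  · simpa using hasSum_single 0 h

lemma EvalsTo.add (hA : EvalsTo ξ A u) (hB : EvalsTo ξ B v) : EvalsTo ξ (A + B) (u + v) := by
  have h : ∀ i, PowerSeries.coeff i (A + B) * ξ ^ i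
      = PowerSeries.coeff i A * ξ ^ i + PowerSeries.coeff i B * ξ ^ i := fun i => by
    rw [map_add, add_mul]
  simp only [EvalsTo, h]
  exact ⟨(hA.1.add hB.1).of_nonneg_of_le (fun _ => norm_nonneg _) fun i => norm_add_le _ _,
    hA.2.add hB.2⟩

lemma EvalsTo.smul (c : ℝ) (hA : EvalsTo ξ A u) : EvalsTo ξ (c • A) (c * u) := by
  have h : ∀ i, PowerSeries.coeff i (c • A) * ξ ^ i = c * (PowerSeries.coeff i A * ξ ^ i) :=
    fun i => by rw [PowerSeries.coeff_smul, smul_eq_mul, mul_assoc]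
  simp only [EvalsTo, h, norm_mul c]
  exact ⟨hA.1.mul_left _, hA.2.mul_left _⟩

lemma EvalsTo.mul (hA : EvalsTo ξ A u) (hB : EvalsTo ξ B v) : EvalsTo ξ (A * B) (u * v) := by
  have h : ∀ i, PowerSeries.coeff i (A * B) * ξ ^ i
      = ∑ p ∈ Finset.HasAntidiagonal.antidiagonal i,
        (PowerSeries.coeff p.1 A * ξ ^ p.1) * (PowerSeries.coeff p.2 B * ξ ^ p.2) := fun i => by
    rw [PowerSeries.coeff_mul, Finset.sum_mul]
    refine Finset.sum_congr rfl fun p hp => ?_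
    rw [← Finset.HasAntidiagonal.mem_antidiagonal.1 hp, pow_add]
    ring
  have hs := summable_norm_sum_mul_antidiagonal_of_summable_norm hA.1 hB.1
  simp only [EvalsTo, h]
  refine ⟨hs, ?_⟩
  rw [← hA.2.tsum_eq, ← hB.2.tsum_eq,
    tsum_mul_tsum_eq_tsum_sum_antidiagonal_of_summable_norm hA.1 hB.1]
  exact hs.of_norm.hasSum

end EvalsTo

/-- The sum of the exponential generating series `∑ f_i ξ^i / i!`. -/
noncomputable def serSum (f : ℕ → ℝ) (ξ : ℝ) : ℝ := ∑' i, f i / (i.factorial : ℝ) * ξ ^ i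

/-- The exponential generating series of `f` converges absolutely on `(-ρ, ρ)`. -/
def ConvOn (ρ : ℝ) (f : ℕ → ℝ) : Prop :=
  ∀ ξ : ℝ, |ξ| < ρ → Summable fun i => ‖f i / (i.factorial : ℝ) * ξ ^ i‖

section ConvOn

variable {ρ : ℝ} {f : ℕ → ℝ}

lemma ConvOn.evalsTo (hf : ConvOn ρ f) {ξ : ℝ} (hξ : |ξ| < ρ) :
    EvalsTo ξ (ser f) (serSum f ξ) := by
  simp only [EvalsTo, ser, PowerSeries.coeff_mk]
  exact ⟨hf ξ hξ, (hf ξ hξ).of_norm.hasSum⟩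

lemma ConvOn.shift (hf : ConvOn ρ f) : ConvOn ρ fun i => f (i + 1) := by
  intro ξ hξ
  obtain ⟨η, h1, h2⟩ := exists_between hξ
  have hη : 0 < η := (abs_nonneg ξ).trans_lt h1
  have hs := hf η (by rwa [abs_of_pos hη])
  have hgeo : Summable fun i : ℕ => ((i : ℝ) + 1) * (|ξ| / η) ^ i := by
    have hq : ‖|ξ| / η‖ < 1 := by
      rw [norm_div, norm_eq_abs, norm_eq_abs, abs_abs, abs_of_pos hη, div_lt_one hη]
      exact h1
    have := (summable_pow_mul_geometric_of_norm_lt_one 1 hq).add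
      (summable_geometric_of_norm_lt_one hq)
    refine this.congr fun i => ?_
    ring
  refine (hgeo.mul_left ((∑' i, ‖f i / (i.factorial : ℝ) * η ^ i‖) / η)).of_nonneg_of_le
    (fun _ => norm_nonneg _) fun i => ?_
  have hle := hs.le_tsum (i + 1) fun _ _ => norm_nonneg _
  have hfac : (0 : ℝ) < (i.factorial : ℝ) := by exact_mod_cast Nat.factorial_pos _
  have hfac' : ((i + 1).factorial : ℝ) = ((i : ℝ) + 1) * (i.factorial : ℝ) := by
    rw [Nat.factorial_succ]; push_cast; rfl
  have hi : (0 : ℝ) < (i : ℝ) + 1 := by positivity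
  calc ‖f (i + 1) / (i.factorial : ℝ) * ξ ^ i‖
      = ‖f (i + 1) / ((i + 1).factorial : ℝ) * η ^ (i + 1)‖ / η
          * (((i : ℝ) + 1) * (|ξ| / η) ^ i) := by
        simp only [norm_mul, norm_div, norm_pow, norm_eq_abs, abs_of_pos hη, hfac',
          abs_of_pos hi, abs_of_pos hfac]
        rw [div_pow, pow_succ]
        field_simp
    _ ≤ _ := by gcongr

lemma ConvOn.hasDerivAt (hf : ConvOn ρ f) {ξ : ℝ} (hξ : |ξ| < ρ) :
    HasDerivAt (serSum f) (serSum (fun i => f (i + 1)) ξ) ξ := by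
  obtain ⟨η, h1, h2⟩ := exists_between hξ
  have hη : 0 < η := (abs_nonneg ξ).trans_lt h1
  have hfac : ∀ i : ℕ, f (i + 1) / ((i + 1).factorial : ℝ) * ((i + 1 : ℕ) : ℝ)
      = f (i + 1) / (i.factorial : ℝ) := fun i => by
    have : (i.factorial : ℝ) ≠ 0 := by exact_mod_cast Nat.factorial_ne_zero _
    rw [Nat.factorial_succ]; push_cast; field_simp
  have hu : Summable fun i : ℕ => ‖f i / (i.factorial : ℝ) * ((i : ℝ) * η ^ (i - 1))‖ := by
    rw [← summable_nat_add_iff 1]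
    refine (hf.shift η (by rwa [abs_of_pos hη])).congr fun i => ?_
    rw [Nat.add_sub_cancel, ← mul_assoc, hfac]
  have key := hasDerivAt_tsum_of_isPreconnected (t := Metric.ball (0 : ℝ) η) (y₀ := 0) (y := ξ)
    (g := fun i y => f i / (i.factorial : ℝ) * y ^ i)
    (g' := fun i y => f i / (i.factorial : ℝ) * ((i : ℝ) * y ^ (i - 1))) hu Metric.isOpen_ball
    (convex_ball _ _).isPreconnected (fun i y _ => (hasDerivAt_pow i y).const_mul _)
    (fun i y hy => ?_) (Metric.mem_ball_self hη)
    (hf 0 (by simpa using hη.trans h2)).of_norm (by simpa using h1)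
  · have h0 : Summable fun i : ℕ => f i / (i.factorial : ℝ) * ((i : ℝ) * ξ ^ (i - 1)) := by
      rw [← summable_nat_add_iff 1]
      refine (hf.shift ξ hξ).of_norm.congr fun i => ?_
      rw [Nat.add_sub_cancel, ← mul_assoc, hfac]
    rw [h0.tsum_eq_zero_add] at key
    simp only [Nat.cast_zero, zero_mul, mul_zero, zero_add, Nat.add_sub_cancel, ← mul_assoc,
      hfac] at key
    exact key
  · have hy' : |y| ≤ η := by simpa using (Metric.mem_ball.1 hy).le
    simp only [norm_mul, norm_pow, norm_eq_abs, abs_of_pos hη]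
    gcongr

lemma ConvOn.contDiffOn (hf : ConvOn ρ f) :
    ContDiffOn ℝ (⊤ : ℕ∞) (serSum f) (Set.Ioo (-ρ) ρ) := by
  rw [contDiffOn_infty]
  intro m
  induction m generalizing f with
  | zero =>
    exact contDiffOn_zero.2 fun ξ hξ =>
      (hf.hasDerivAt (abs_lt.2 hξ)).continuousAt.continuousWithinAt
  | succ m ih =>
    refine (contDiffOn_succ_iff_deriv_of_isOpen (n := (m : WithTop ℕ∞)) isOpen_Ioo).2
      ⟨fun ξ hξ => (hf.hasDerivAt (abs_lt.2 hξ)).differentiableAt.differentiableWithinAt,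
        by simp, ?_⟩
    exact (ih hf.shift).congr fun ξ hξ => (hf.hasDerivAt (abs_lt.2 hξ)).deriv

end ConvOn

/-- A quasilinear equation `d · f' = n` between Taylor coefficients, where `d` and `n` are the
coefficients of functions `D` and `N`, holds between the sums. -/
lemma ode_of_leibniz {f d e : ℕ → ℝ} {ρ ξ D N : ℝ} (hf : ConvOn ρ f) (hξ : |ξ| < ρ)
    (hd : EvalsTo ξ (ser d) D) (he : EvalsTo ξ (ser e) N)
    (h : ∀ m, ∑ j ∈ Finset.range (m + 1), (Nat.choose m j : ℝ) * d (m - j) * f (j + 1) = e m) :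
    D * deriv (serSum f) ξ = N := by
  rw [(hf.hasDerivAt hξ).deriv]
  refine (hd.mul (hf.shift.evalsTo hξ)).unique ?_
  rw [ser_mul_of_leibniz h]
  exact he

lemma Wfun_eq (γ r : ℝ) : Wfun γ r = serSum (Wc γ r) := by
  funext ξ
  simp only [Wfun, serSum, Wc, div_mul_eq_mul_div]

lemma Zfun_eq (γ r : ℝ) : Zfun γ r = serSum (Zc γ r) := by
  funext ξ
  simp only [Zfun, serSum, Zc, div_mul_eq_mul_div]

/-- The sums of the Taylor series solve the system wherever both series converge. -/
lemma Admissible.isOdeSolutionOn {γ r ρ : ℝ} {n : ℕ} {s : Set ℝ} (hI : Admissible γ n s)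
    (hγ : 1 < γ) (hr : r ∈ s) (hW : ConvOn ρ (Wc γ r)) (hZ : ConvOn ρ (Zc γ r)) :
    IsOdeSolutionOn γ r (Wfun γ r) (Zfun γ r) (Set.Ioo (-ρ) ρ) := by
  intro ξ hξ
  have hξ : |ξ| < ρ := abs_lt.2 hξ
  have hr1 := (hI hr).1
  have hr2 := (hI hr).2.1
  have eW := hW.evalsTo hξ
  have eZ := hZ.evalsTo hξ
  rw [Wfun_eq, Zfun_eq]
  constructor
  · refine ode_of_leibniz hW hξ (d := DWseq γ (Wc γ r) (Zc γ r))
      (e := NWseq γ r (Wc γ r) (Zc γ r)) ?_ ?_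
      (Wc_eqn (hI.DW_ne hγ hr) (W₁_eqn hγ hr1 hr2))
    · rw [ser_DWseq]
      convert (EvalsTo.one.add (eW.smul _)).add (eZ.smul _) using 1
      unfold DW; ring
    · rw [ser_NWseq]
      convert (((eW.smul _).add ((eW.mul eW).smul _)).add ((eW.mul eZ).smul _)).add
        ((eZ.mul eZ).smul _) using 1
      unfold NW; ring
  · refine ode_of_leibniz hZ hξ (d := DZseq γ (Wc γ r) (Zc γ r))
      (e := NZseq γ r (Wc γ r) (Zc γ r)) ?_ ?_
      (Zc_eqn (DZ_sonic r hγ) (NZ_sonic hγ hr1 hr2) (hI.DZ1_ne hγ hr)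
        (Z₁_eqn hγ hr1 hr2 (den_ne_zero_and_R2_ne_zero (hI hr).2.2.1 (hI hr).2.2.2).2)
        (hI.DZ1_mul_kFun hγ hr) (hI.sub_kFun_ne hr))
    · rw [ser_DZseq]
      convert (EvalsTo.one.add (eW.smul _)).add (eZ.smul _) using 1
      unfold DZ; ring
    · rw [ser_NZseq]
      convert (((eZ.smul _).add ((eZ.mul eZ).smul _)).add ((eW.mul eZ).smul _)).add
        ((eW.mul eW).smul _) using 1
      unfold NZ; ring

section Bound

variable {f : ℕ → ℝ} {C ξ : ℝ}

/-- A geometric majorant for the terms of the series. -/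
lemma norm_term_le (h : ∀ i, |f i| ≤ C ^ (i + 1) * (i.factorial : ℝ)) (i : ℕ) :
    ‖f i / (i.factorial : ℝ) * ξ ^ i‖ ≤ C * (C * |ξ|) ^ i := by
  have hfac : (0 : ℝ) < (i.factorial : ℝ) := by exact_mod_cast Nat.factorial_pos _
  rw [norm_mul, norm_div, norm_pow, norm_eq_abs, norm_eq_abs, norm_eq_abs, abs_of_pos hfac,
    mul_pow, ← mul_assoc, ← pow_succ']
  gcongr
  rw [div_le_iff₀ hfac]
  exact h i

lemma summable_majorant (hC : 0 < C) (hξ : |ξ| < 1 / C) :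
    Summable fun i : ℕ => C * (C * |ξ|) ^ i :=
  (summable_geometric_of_lt_one (by positivity) (by rwa [lt_div_iff₀' hC] at hξ)).mul_left C

lemma convOn_of_bound (hC : 0 < C) (h : ∀ i, |f i| ≤ C ^ (i + 1) * (i.factorial : ℝ)) :
    ConvOn (1 / C) f := fun _ hξ =>
  (summable_majorant hC hξ).of_nonneg_of_le (fun _ => norm_nonneg _) (norm_term_le h)

/-- The sum at a fixed point depends continuously on parameters, by the Weierstrass test. -/
lemma continuousOn_serSum {F : ℝ → ℕ → ℝ} {s : Set ℝ} (hC : 0 < C) (hξ : |ξ| < 1 / C)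
    (h : ∀ r ∈ s, ∀ i, |F r i| ≤ C ^ (i + 1) * (i.factorial : ℝ))
    (hF : ∀ i, ContinuousOn (fun r => F r i) s) : ContinuousOn (fun r => serSum (F r) ξ) s :=
  continuousOn_tsum (fun i => ((hF i).div_const _).mul continuousOn_const)
    (summable_majorant hC hξ) fun i r hr => norm_term_le (h r hr) i

end Bound

/-- Proposition 2.3: on a closed interval `I = [a,b]` of parameters `r` with
`1 < r < r*(γ)` and `n < k(r) < n+1`, the Taylor coefficients satisfy
`|W_i| + |Z_i| ≤ C^{i+1} i!` uniformly, the corresponding power series converge for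
`|ξ| < 1/C` and solve the ODE system there, and they depend continuously on `r`. -/
theorem statement6 (γ : ℝ) (hγ : 1 < γ) (n : ℕ) (a b : ℝ) (hab : a ≤ b)
    (hI : Set.Icc a b ⊆
      {r : ℝ | 1 < r ∧ r < rStar γ ∧ (n : ℝ) < kFun γ r ∧ kFun γ r < (n : ℝ) + 1}) :
    ∃ C : ℝ, 0 < C ∧
      (∀ r ∈ Set.Icc a b,
        (∀ i : ℕ,
          |(coeff γ r i).1| + |(coeff γ r i).2| ≤ C ^ (i + 1) * (Nat.factorial i : ℝ)) ∧
        (∀ ξ : ℝ, |ξ| < 1 / C →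
          Summable (fun i : ℕ => (coeff γ r i).1 * ξ ^ i / (Nat.factorial i : ℝ)) ∧
          Summable (fun i : ℕ => (coeff γ r i).2 * ξ ^ i / (Nat.factorial i : ℝ))) ∧
        ContDiffOn ℝ (⊤ : ℕ∞) (Wfun γ r) (Set.Ioo (-(1 / C)) (1 / C)) ∧
        ContDiffOn ℝ (⊤ : ℕ∞) (Zfun γ r) (Set.Ioo (-(1 / C)) (1 / C)) ∧
        IsOdeSolutionOn γ r (Wfun γ r) (Zfun γ r) (Set.Ioo (-(1 / C)) (1 / C))) ∧
      (∀ ξ : ℝ, |ξ| < 1 / C →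
        ContinuousOn (fun r : ℝ => Wfun γ r ξ) (Set.Icc a b) ∧
        ContinuousOn (fun r : ℝ => Zfun γ r ξ) (Set.Icc a b)) := by
  have hA : Admissible γ n (Set.Icc a b) := hI
  obtain ⟨C, hC, hbound⟩ := hA.exists_bound hγ isCompact_Icc
  have hbW : ∀ r ∈ Set.Icc a b, ∀ i, |Wc γ r i| ≤ C ^ (i + 1) * (i.factorial : ℝ) :=
    fun r hr i => (le_add_of_nonneg_right (abs_nonneg _)).trans (hbound r hr i)
  have hbZ : ∀ r ∈ Set.Icc a b, ∀ i, |Zc γ r i| ≤ C ^ (i + 1) * (i.factorial : ℝ) :=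
    fun r hr i => (le_add_of_nonneg_left (abs_nonneg _)).trans (hbound r hr i)
  refine ⟨C, hC, fun r hr => ?_, fun ξ hξ => ⟨?_, ?_⟩⟩
  · have hW := convOn_of_bound hC (hbW r hr)
    have hZ := convOn_of_bound hC (hbZ r hr)
    refine ⟨hbound r hr, fun ξ hξ => ⟨?_, ?_⟩, ?_, ?_, hA.isOdeSolutionOn hγ hr hW hZ⟩
    · exact (hW ξ hξ).of_norm.congr fun i => div_mul_eq_mul_div _ _ _
    · exact (hZ ξ hξ).of_norm.congr fun i => div_mul_eq_mul_div _ _ _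
    · rw [Wfun_eq]; exact hW.contDiffOn
    · rw [Zfun_eq]; exact hZ.contDiffOn
  · simp only [Wfun_eq]
    exact continuousOn_serSum hC hξ hbW fun i => (hA.continuousOn_coeff hγ i).1
  · simp only [Zfun_eq]
    exact continuousOn_serSum hC hξ hbZ fun i => (hA.continuousOn_coeff hγ i).2

end SelfSimilarImplosion
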